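/- arXiv:2405.19786 — 2 statements merged into one kernel-verified Lean document; each statement's English description precedes it below -/
import Mathlib

section
/- Let p > N ≥ 2 and let {x₁,…,x_k} be distinct points in B_R with k ≥ 2. Then cap_p({x₁,…,x_{k-1}}; B_R) < cap_p({x₁,…,x_k}; B_R), i.e. the relative p-capacity strictly increases when an extra point is added. -/
open MeasureTheory Filter
open scoped ENNReal

noncomputable section

/-- Relative `p`-capacity of a compact set `K` inside an open set `E`:
infimum of the `p`-Dirichlet energy over smooth compactly supported functions
in `E` which are at least `1` on `K`. -/
noncomputable def pCapacity {N : ℕ} (p : ℝ) (K E : Set (EuclideanSpace ℝ (Fin N))) : ℝ :=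
  sInf {c : ℝ | ∃ φ : EuclideanSpace ℝ (Fin N) → ℝ, ContDiff ℝ (⊤ : ℕ∞) φ ∧ HasCompactSupport φ ∧
    tsupport φ ⊆ E ∧ (∀ x ∈ K, 1 ≤ φ x) ∧ c = ∫ x, ‖fderiv ℝ φ x‖ ^ p}

/-!
Let `φ` be an almost minimiser for the capacity of `K`, truncated at height `1 + ε / 2`. Testing its
almost minimality with `θ ^ m * (1 + ε - φ) ^ (1 - p)`, where `m ≥ p` and `θ` is a cutoff supported
in `E \ K`, bounds the `p`-energy of `log (1 + ε - φ)` locally in `E \ K`, independently of `ε`.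
Since `p > N`, Morrey's inequality turns this into a Harnack inequality for `1 + ε - φ` on balls.
Hence the set of points where almost minimisers stay below `1` by a definite amount is closed
relative to `Kᶜ`. It is open, again by Morrey, and contains `Eᶜ`, so it contains every component of
`Kᶜ` that leaves `E`. At a point `a` of such a component, the constraint `1 ≤ φ a` costs a definite
amount of energy.
-/

section Morrey

open Module Metric Set

lemma lintegral_Ioc_rpow_neg {s : ℝ} (hs : s < 1) :
    ∫⁻ t in Ioc (0 : ℝ) 1, ENNReal.ofReal (t ^ (-s)) = ENNReal.ofReal (1 - s)⁻¹ := by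
  have hint : IntervalIntegrable (fun t : ℝ => t ^ (-s)) volume 0 1 :=
    intervalIntegral.intervalIntegrable_rpow' (by linarith)
  rw [← ofReal_integral_eq_lintegral_ofReal
    ((intervalIntegrable_iff_integrableOn_Ioc_of_le zero_le_one).1 hint),
    ← intervalIntegral.integral_of_le zero_le_one, integral_rpow (.inl (by linarith)),
    Real.one_rpow, Real.zero_rpow (by linarith), sub_zero, one_div, neg_add_eq_sub]
  filter_upwards [ae_restrict_mem measurableSet_Ioc] with t ht
  exact Real.rpow_nonneg ht.1.le _

variable {V F : Type*} [NormedAddCommGroup V] [NormedSpace ℝ V] [NormedAddCommGroup F]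

lemma enorm_sub_le_lintegral_fderiv_lineMap [NormedSpace ℝ F] [CompleteSpace F] {f : V → F}
    (hf : ContDiff ℝ 1 f) (x y : V) :
    ‖f y - f x‖ₑ ≤
      ‖y - x‖ₑ * ∫⁻ t in Ioc (0 : ℝ) 1, ‖fderiv ℝ f (AffineMap.lineMap x y t)‖ₑ := by
  have hderiv (t : ℝ) : HasDerivAt (fun t => f (AffineMap.lineMap x y t))
      (fderiv ℝ f (AffineMap.lineMap x y t) (y - x)) t :=
    (hf.differentiable one_ne_zero _).hasFDerivAt.comp_hasDerivAt t AffineMap.hasDerivAt_lineMap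
  have hcont : Continuous fun t : ℝ => fderiv ℝ f (AffineMap.lineMap x y t) :=
    (hf.continuous_fderiv one_ne_zero).comp AffineMap.lineMap_continuous
  have hftc : f y - f x = ∫ t in Ioc (0 : ℝ) 1, fderiv ℝ f (AffineMap.lineMap x y t) (y - x) := by
    rw [← intervalIntegral.integral_of_le zero_le_one,
      intervalIntegral.integral_eq_sub_of_hasDerivAt (fun t _ => hderiv t)
        ((hcont.clm_apply continuous_const).intervalIntegrable 0 1)]
    simp
  rw [hftc, mul_comm, ← lintegral_mul_const' _ _ enorm_ne_top]
  exact (enorm_integral_le_lintegral_enorm _).trans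
    (lintegral_mono fun t => ContinuousLinearMap.le_opENorm _ _)

variable [FiniteDimensional ℝ V] [MeasurableSpace V] [BorelSpace V] (μ : Measure V)
  [μ.IsAddHaarMeasure]

lemma setLIntegral_lineMap_le {U : Set V} (hU : MeasurableSet U) (hUc : Convex ℝ U) {x : V}
    (hx : x ∈ U) {t : ℝ} (ht : t ∈ Ioc 0 1) (g : V → ℝ≥0∞) :
    ∫⁻ y in U, g (AffineMap.lineMap x y t) ∂μ ≤
      ENNReal.ofReal (t ^ finrank ℝ V)⁻¹ * ∫⁻ y in U, g y ∂μ := by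
  have hmaps : (fun y => AffineMap.lineMap x y t) '' U ⊆ U := by
    rintro _ ⟨y, hy, rfl⟩
    exact hUc.lineMap_mem hx hy ⟨ht.1.le, ht.2⟩
  have hderiv (y : V) : HasFDerivAt (fun y => AffineMap.lineMap x y t)
      (t • ContinuousLinearMap.id ℝ V) y := by
    simp only [AffineMap.lineMap_apply, vsub_eq_sub, vadd_eq_add]
    exact (((hasFDerivAt_id y).sub_const x).const_smul t).add_const x
  have hinj : Function.Injective fun y => AffineMap.lineMap x y t := fun y z h => by
    simpa [AffineMap.lineMap_apply, ht.1.ne'] using h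
  have hpos : 0 < t ^ finrank ℝ V := pow_pos ht.1 _
  have hcov := lintegral_image_eq_lintegral_abs_det_fderiv_mul μ hU
    (fun y _ => (hderiv y).hasFDerivWithinAt) hinj.injOn g
  have hdet : |(t • ContinuousLinearMap.id ℝ V).det| = t ^ finrank ℝ V := by
    simp [ContinuousLinearMap.det, abs_of_pos hpos]
  rw [hdet, lintegral_const_mul' _ _ ENNReal.ofReal_ne_top] at hcov
  rw [ENNReal.ofReal_inv_of_pos hpos, ← ENNReal.div_eq_inv_mul,
    ENNReal.le_div_iff_mul_le (.inl (by simpa using hpos)) (.inl ENNReal.ofReal_ne_top),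
    mul_comm, ← hcov]
  exact lintegral_mono_set hmaps

lemma eLpNorm'_comp_lineMap_le {p : ℝ} (hp : 0 < p) {U : Set V} (hU : MeasurableSet U)
    (hUc : Convex ℝ U) {x : V} (hx : x ∈ U) {t : ℝ} (ht : t ∈ Ioc 0 1) (g : V → F) :
    eLpNorm' (fun y => g (AffineMap.lineMap x y t)) p (μ.restrict U) ≤
      ENNReal.ofReal (t ^ (-(finrank ℝ V / p))) * eLpNorm' g p (μ.restrict U) := by
  simp only [eLpNorm'_eq_lintegral_enorm]
  calc (∫⁻ y in U, ‖g (AffineMap.lineMap x y t)‖ₑ ^ p ∂μ) ^ (1 / p)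
      ≤ (ENNReal.ofReal (t ^ finrank ℝ V)⁻¹ * ∫⁻ y in U, ‖g y‖ₑ ^ p ∂μ) ^ (1 / p) := by
        gcongr
        exact setLIntegral_lineMap_le μ hU hUc hx ht fun y => ‖g y‖ₑ ^ p
    _ = _ := by
        have hexp : ((t ^ finrank ℝ V)⁻¹) ^ (1 / p) = t ^ (-(finrank ℝ V / p)) := by
          rw [← Real.rpow_natCast, ← Real.rpow_neg ht.1.le, ← Real.rpow_mul ht.1.le]
          ring_nf
        rw [ENNReal.mul_rpow_of_nonneg _ _ (by positivity),
          ENNReal.ofReal_rpow_of_pos (inv_pos.2 (pow_pos ht.1 _)), hexp]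

variable [NormedSpace ℝ F] [CompleteSpace F]

lemma setLIntegral_enorm_sub_le {p : ℝ} (hp : 1 ≤ p) (hVp : finrank ℝ V < p)
    {U : Set V} (hU : MeasurableSet U) (hUc : Convex ℝ U) {f : V → F} (hf : ContDiff ℝ 1 f)
    {x : V} (hx : x ∈ U) :
    ∫⁻ y in U, ‖f y - f x‖ₑ ∂μ ≤ ediam U * (ENNReal.ofReal (1 - finrank ℝ V / p)⁻¹ *
      (eLpNorm' (fderiv ℝ f) p (μ.restrict U) * μ U ^ (1 - 1 / p))) := by
  have hp0 : 0 < p := by linarith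
  have hcont := hf.continuous_fderiv one_ne_zero
  set A := eLpNorm' (fderiv ℝ f) p (μ.restrict U) * μ U ^ (1 - 1 / p)
  have hline {t : ℝ} (ht : t ∈ Ioc (0 : ℝ) 1) :
      ∫⁻ y in U, ‖fderiv ℝ f (AffineMap.lineMap x y t)‖ₑ ∂μ ≤
        ENNReal.ofReal (t ^ (-(finrank ℝ V / p))) * A := by
    have hholder := eLpNorm'_le_eLpNorm'_mul_rpow_measure_univ (μ := μ.restrict U) one_pos hp
      (f := fun y => fderiv ℝ f (AffineMap.lineMap x y t))
      (hcont.comp (by fun_prop)).aestronglyMeasurable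
    simp only [eLpNorm'_eq_lintegral_enorm (q := 1), ENNReal.rpow_one, div_one,
      Measure.restrict_apply_univ] at hholder
    grw [hholder, eLpNorm'_comp_lineMap_le μ hp0 hU hUc hx ht, mul_assoc]
  calc ∫⁻ y in U, ‖f y - f x‖ₑ ∂μ
      ≤ ∫⁻ y in U, (ediam U *
          ∫⁻ t in Ioc (0 : ℝ) 1, ‖fderiv ℝ f (AffineMap.lineMap x y t)‖ₑ) ∂μ := by
        refine setLIntegral_mono' hU fun y hy => ?_
        grw [enorm_sub_le_lintegral_fderiv_lineMap hf, ← edist_eq_enorm_sub,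
          edist_le_ediam_of_mem hy hx]
    _ = ediam U * ∫⁻ t in Ioc (0 : ℝ) 1,
          ∫⁻ y in U, ‖fderiv ℝ f (AffineMap.lineMap x y t)‖ₑ ∂μ := by
        have hmeas : Measurable fun z : V × ℝ =>
            ‖fderiv ℝ f (AffineMap.lineMap x z.1 z.2)‖ₑ :=
          (hcont.comp (by simp only [AffineMap.lineMap_apply]; fun_prop)).enorm.measurable
        rw [lintegral_const_mul _ hmeas.lintegral_prod_right',
          lintegral_lintegral_swap hmeas.aemeasurable]
    _ ≤ ediam U * ∫⁻ t in Ioc (0 : ℝ) 1, ENNReal.ofReal (t ^ (-(finrank ℝ V / p))) * A := by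
        gcongr ediam U * ?_
        exact setLIntegral_mono' measurableSet_Ioc fun t ht => hline ht
    _ = _ := by
        rw [lintegral_mul_const _ (by fun_prop),
          lintegral_Ioc_rpow_neg ((div_lt_one hp0).2 hVp)]

lemma enorm_sub_le_of_convex {p : ℝ} (hp : 1 ≤ p) (hVp : finrank ℝ V < p)
    {U : Set V} (hU : MeasurableSet U) (hUc : Convex ℝ U) (hU0 : μ U ≠ 0) (hUtop : μ U ≠ ∞)
    {f : V → F} (hf : ContDiff ℝ 1 f) {x y : V} (hx : x ∈ U) (hy : y ∈ U) :
    ‖f x - f y‖ₑ ≤ 2 * (ediam U * (ENNReal.ofReal (1 - finrank ℝ V / p)⁻¹ *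
      (eLpNorm' (fderiv ℝ f) p (μ.restrict U) * μ U ^ (-(1 / p))))) := by
  refine (ENNReal.mul_le_mul_iff_left hU0 hUtop).1 ?_
  calc ‖f x - f y‖ₑ * μ U = ∫⁻ _ in U, ‖f x - f y‖ₑ ∂μ := (setLIntegral_const U _).symm
    _ ≤ ∫⁻ z in U, (‖f z - f y‖ₑ + ‖f z - f x‖ₑ) ∂μ := by
        refine lintegral_mono fun z => ?_
        simpa using enorm_sub_le (a := f z - f y) (b := f z - f x)
    _ = (∫⁻ z in U, ‖f z - f y‖ₑ ∂μ) + ∫⁻ z in U, ‖f z - f x‖ₑ ∂μ :=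
        lintegral_add_left (hf.continuous.sub continuous_const).enorm.measurable _
    _ ≤ _ := add_le_add (setLIntegral_enorm_sub_le μ hp hVp hU hUc hf hy)
        (setLIntegral_enorm_sub_le μ hp hVp hU hUc hf hx)
    _ = _ := by
        rw [sub_eq_neg_add 1 (1 / p), ENNReal.rpow_add _ _ hU0 hUtop, ENNReal.rpow_one]
        ring

lemma exists_norm_sub_le_mul_rpow_of_mem_ball {p : ℝ} (hp : 1 ≤ p)
    (hVp : finrank ℝ V < p) :
    ∃ C : ℝ, 0 ≤ C ∧ ∀ ⦃f : V → F⦄, ContDiff ℝ 1 f → ∀ ⦃c : V⦄ ⦃r B : ℝ⦄, 0 < r → 0 ≤ B →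
      ∫⁻ z in ball c r, ‖fderiv ℝ f z‖ₑ ^ p ∂μ ≤ ENNReal.ofReal B →
      ∀ ⦃x y : V⦄, x ∈ ball c r → y ∈ ball c r →
        ‖f x - f y‖ ≤ C * r ^ (1 - finrank ℝ V / p) * B ^ (1 / p) := by
  set v := μ.real (ball 0 1)
  have hv : 0 < v := ENNReal.toReal_pos (measure_ball_pos _ _ one_pos).ne' measure_ball_lt_top.ne
  have hVp' : 0 < 1 - finrank ℝ V / p := by rw [sub_pos, div_lt_one (by linarith)]; exact hVp
  refine ⟨4 * (1 - finrank ℝ V / p)⁻¹ * v ^ (-(1 / p)), by positivity,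
    fun f hf c r B hr hB hfB x y hx hy => ?_⟩
  have hvol : μ (ball c r) = ENNReal.ofReal (r ^ finrank ℝ V * v) := by
    rw [Measure.addHaar_ball_of_pos _ _ hr, ENNReal.ofReal_mul (by positivity),
      ofReal_measureReal measure_ball_lt_top.ne]
  have hnorm : eLpNorm' (fderiv ℝ f) p (μ.restrict (ball c r)) ≤ ENNReal.ofReal (B ^ (1 / p)) := by
    rw [eLpNorm'_eq_lintegral_enorm, ← ENNReal.ofReal_rpow_of_nonneg hB (by positivity)]
    gcongr
  have hdiam : ediam (ball c r) ≤ ENNReal.ofReal (2 * r) := by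
    rw [← eball_ofReal, ENNReal.ofReal_mul zero_le_two, ENNReal.ofReal_ofNat]
    exact ediam_eball_le
  have hscale : r * (r ^ finrank ℝ V * v) ^ (-(1 / p)) =
      r ^ (1 - finrank ℝ V / p) * v ^ (-(1 / p)) := by
    rw [Real.mul_rpow (by positivity) hv.le, ← Real.rpow_natCast, ← Real.rpow_mul hr.le,
      sub_eq_add_neg, Real.rpow_one_add' hr.le (by rw [← sub_eq_add_neg]; exact hVp'.ne')]
    ring_nf
  have hmorrey := enorm_sub_le_of_convex μ hp hVp measurableSet_ball (convex_ball c r)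
    (measure_ball_pos μ c hr).ne' measure_ball_lt_top.ne hf hx hy
  grw [hnorm, hdiam, hvol, ENNReal.ofReal_rpow_of_pos (by positivity)] at hmorrey
  rw [← ofReal_norm, ← ENNReal.ofReal_mul (by positivity), ← ENNReal.ofReal_mul (by positivity),
    ← ENNReal.ofReal_mul (by positivity), ← ENNReal.ofReal_ofNat 2,
    ← ENNReal.ofReal_mul (by positivity), ENNReal.ofReal_le_ofReal_iff (by positivity)] at hmorrey
  refine hmorrey.trans_eq ?_
  calc _ = 4 * (1 - finrank ℝ V / p)⁻¹ * (r * (r ^ finrank ℝ V * v) ^ (-(1 / p))) *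
        B ^ (1 / p) := by ring
    _ = _ := by rw [hscale]; ring

end Morrey

section Truncation

/-- A smooth nondecreasing `1`-Lipschitz function equal to the identity on `(-∞, 1]` and bounded by
`1 + η`; it cuts competitors for the capacity down to height `1 + η`. -/
def smoothTruncation (η x : ℝ) : ℝ :=
  ∫ s in (0 : ℝ)..x, (1 - Real.smoothTransition ((s - 1) / η))

lemma hasDerivAt_smoothTruncation (η x : ℝ) :
    HasDerivAt (smoothTruncation η) (1 - Real.smoothTransition ((x - 1) / η)) x := by
  have hcont : Continuous fun s : ℝ => 1 - Real.smoothTransition ((s - 1) / η) :=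
    continuous_const.sub (Real.smoothTransition.continuous.comp (by fun_prop))
  exact intervalIntegral.integral_hasDerivAt_right (hcont.intervalIntegrable _ _)
    hcont.stronglyMeasurable.stronglyMeasurableAtFilter hcont.continuousAt

lemma deriv_smoothTruncation (η : ℝ) :
    deriv (smoothTruncation η) = fun x => 1 - Real.smoothTransition ((x - 1) / η) :=
  funext fun x => (hasDerivAt_smoothTruncation η x).deriv

lemma differentiable_smoothTruncation (η : ℝ) : Differentiable ℝ (smoothTruncation η) :=
  fun x => (hasDerivAt_smoothTruncation η x).differentiableAt

lemma contDiff_smoothTruncation (η : ℝ) : ContDiff ℝ (⊤ : ℕ∞) (smoothTruncation η) := by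
  refine contDiff_infty_iff_deriv.2 ⟨differentiable_smoothTruncation η, ?_⟩
  rw [deriv_smoothTruncation]
  exact contDiff_const.sub (Real.smoothTransition.contDiff.comp (by fun_prop))

lemma deriv_smoothTruncation_mem_Icc (η x : ℝ) : deriv (smoothTruncation η) x ∈ Set.Icc 0 1 := by
  rw [deriv_smoothTruncation]
  exact ⟨sub_nonneg.2 (Real.smoothTransition.le_one _),
    sub_le_self _ (Real.smoothTransition.nonneg _)⟩

lemma monotone_smoothTruncation (η : ℝ) : Monotone (smoothTruncation η) :=
  monotone_of_deriv_nonneg (differentiable_smoothTruncation η)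
    fun x => (deriv_smoothTruncation_mem_Icc η x).1

lemma smoothTruncation_zero (η : ℝ) : smoothTruncation η 0 = 0 :=
  intervalIntegral.integral_same

variable {η : ℝ}

lemma smoothTruncation_of_le_one (hη : 0 ≤ η) {x : ℝ} (hx : x ≤ 1) : smoothTruncation η x = x := by
  have hone : ∀ s ∈ Set.uIcc 0 x, 1 - Real.smoothTransition ((s - 1) / η) = 1 := fun s hs => by
    have hs1 : s ≤ 1 := hs.2.trans (max_le zero_le_one hx)
    rw [Real.smoothTransition.zero_of_nonpos (div_nonpos_of_nonpos_of_nonneg (by linarith) hη),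
      sub_zero]
  simp [smoothTruncation, intervalIntegral.integral_congr hone]

lemma min_one_le_smoothTruncation (hη : 0 ≤ η) (x : ℝ) : min x 1 ≤ smoothTruncation η x := by
  rw [← smoothTruncation_of_le_one hη (min_le_right x 1)]
  exact monotone_smoothTruncation η (min_le_left x 1)

lemma smoothTruncation_le (hη : 0 < η) (x : ℝ) : smoothTruncation η x ≤ 1 + η := by
  have hmid : smoothTruncation η (1 + η) ≤ 1 + η := by
    simpa [smoothTruncation_zero] using image_sub_le_mul_sub_of_deriv_le
      (differentiable_smoothTruncation η) (fun y => (deriv_smoothTruncation_mem_Icc η y).2)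
      (show (0 : ℝ) ≤ 1 + η by positivity)
  rcases le_total x (1 + η) with hx | hx
  · exact (monotone_smoothTruncation η hx).trans hmid
  · have hzero : ∀ y ∈ interior (Set.Ici (1 + η)), deriv (smoothTruncation η) y ≤ 0 := by
      intro y hy
      rw [interior_Ici] at hy
      rw [deriv_smoothTruncation]
      simp [Real.smoothTransition.one_of_one_le
        ((one_le_div hη).2 (le_sub_iff_add_le'.2 (le_of_lt hy)))]
    have hflat := (convex_Ici (1 + η)).image_sub_le_mul_sub_of_deriv_le
      (differentiable_smoothTruncation η).continuous.continuousOn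
      (differentiable_smoothTruncation η).differentiableOn hzero _ Set.self_mem_Ici _ hx hx
    linarith

end Truncation

section LogCaccioppoli

variable {X : Type*}

/-- The competitor obtained by testing the minimality of `φ` with `θ ^ m * (ℓ - φ) ^ (1 - p)`,
where `θ` is a cutoff; the factor `t / (p - 1)` makes `t` the coefficient of the logarithmic energy
in `pEnergy_loweredCompetitor_le`. -/
def loweredCompetitor (p ℓ t : ℝ) (m : ℕ) (θ φ : X → ℝ) (x : X) : ℝ :=
  φ x - t / (p - 1) * (θ x ^ m * (ℓ - φ x) ^ (1 - p))

lemma loweredCompetitor_of_cutoff_eq_zero {m : ℕ} (hm : m ≠ 0) {θ φ : X → ℝ} {x : X}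
    (hx : θ x = 0) (p ℓ t : ℝ) : loweredCompetitor p ℓ t m θ φ x = φ x := by
  simp [loweredCompetitor, hx, hm]

lemma tsupport_loweredCompetitor_subset [TopologicalSpace X] {m : ℕ} (hm : m ≠ 0) (p ℓ t : ℝ)
    (θ φ : X → ℝ) : tsupport (loweredCompetitor p ℓ t m θ φ) ⊆ tsupport φ ∪ tsupport θ := by
  refine closure_minimal (fun x hx => ?_) ((isClosed_tsupport _).union (isClosed_tsupport _))
  by_contra! hcon
  rw [Set.mem_union, not_or] at hcon
  refine hx ?_
  rw [loweredCompetitor_of_cutoff_eq_zero hm (image_eq_zero_of_notMem_tsupport hcon.2),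
    image_eq_zero_of_notMem_tsupport hcon.1]

variable {V : Type*} [NormedAddCommGroup V] [NormedSpace ℝ V] {p : ℝ}

lemma norm_one_sub_smul_sub_smul_rpow_le (hp : 1 < p) (A B : V) {s q C : ℝ} (hs : s ∈ Set.Icc 0 1)
    (hC : 0 ≤ C) (hq : |q| ^ p ≤ C * s ^ (p - 1)) :
    ‖(1 - s) • A - q • B‖ ^ p ≤ (1 - s) * ‖A‖ ^ p + C * ‖B‖ ^ p := by
  rcases hs.1.eq_or_lt with rfl | hs0
  · rw [Real.zero_rpow (by linarith), mul_zero] at hq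
    have hq0 : q = 0 := by
      by_contra h
      exact hq.not_gt (Real.rpow_pos_of_pos (abs_pos.2 h) p)
    simp only [hq0, sub_zero, one_smul, zero_smul, one_mul]
    exact le_add_of_nonneg_right (by positivity)
  · have htri : ‖(1 - s) • A - q • B‖ ≤ (1 - s) * ‖A‖ + s * (|q| / s * ‖B‖) := by
      refine (norm_sub_le _ _).trans_eq ?_
      rw [norm_smul, norm_smul, Real.norm_of_nonneg (sub_nonneg.2 hs.2), Real.norm_eq_abs,
        ← mul_assoc s, mul_div_cancel₀ _ hs0.ne']
    have hconv : ((1 - s) * ‖A‖ + s * (|q| / s * ‖B‖)) ^ p ≤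
        (1 - s) * ‖A‖ ^ p + s * (|q| / s * ‖B‖) ^ p :=
      (convexOn_rpow hp.le).2 (norm_nonneg A) (by positivity : 0 ≤ |q| / s * ‖B‖)
        (sub_nonneg.2 hs.2) hs0.le (by ring)
    have hcoeff : s * (|q| / s) ^ p ≤ C := by
      rw [Real.div_rpow (abs_nonneg _) hs0.le, ← mul_div_assoc, div_le_iff₀ (by positivity)]
      calc s * |q| ^ p ≤ s * (C * s ^ (p - 1)) := by gcongr
        _ = C * s ^ p := by rw [Real.rpow_sub_one hs0.ne']; field_simp
    grw [htri, hconv, Real.mul_rpow (by positivity) (norm_nonneg _), ← mul_assoc, hcoeff]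

lemma mul_pow_mul_rpow_rpow_le (hp : 1 < p) {m : ℕ} (hm : p ≤ m) {k t θ w : ℝ} (hk : 0 ≤ k)
    (ht : 0 ≤ t) (hθ : θ ∈ Set.Icc 0 1) (hw : 0 < w) :
    (t * k * θ ^ (m - 1) * w ^ (1 - p)) ^ p ≤
      t * k ^ p * (t * θ ^ m * w ^ (-p)) ^ (p - 1) := by
  have hθ0 := hθ.1
  have hm1 : 1 < m := by exact_mod_cast hp.trans_le hm
  have hθpow : (θ ^ (m - 1)) ^ p ≤ (θ ^ m) ^ (p - 1) := by
    rw [← Real.rpow_natCast, ← Real.rpow_natCast, ← Real.rpow_mul hθ0, ← Real.rpow_mul hθ0]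
    refine Real.rpow_le_rpow_of_exponent_ge_of_imp hθ0 hθ.2 ?_ ?_
    · rw [Nat.cast_pred (by lia)]
      linarith
    · intro _ h
      have : ((m - 1 : ℕ) : ℝ) * p ≠ 0 := mul_ne_zero (by norm_cast; lia) (by linarith)
      contradiction
  have htpow : t ^ p = t * t ^ (p - 1) := by
    rw [← Real.rpow_one_add' ht (by linarith)]
    ring_nf
  have hwpow : (w ^ (1 - p)) ^ p = (w ^ (-p)) ^ (p - 1) := by
    rw [← Real.rpow_mul hw.le, ← Real.rpow_mul hw.le]
    ring_nf
  calc (t * k * θ ^ (m - 1) * w ^ (1 - p)) ^ p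
      = t * t ^ (p - 1) * k ^ p * (θ ^ (m - 1)) ^ p * (w ^ (-p)) ^ (p - 1) := by
        rw [Real.mul_rpow (by positivity) (by positivity),
          Real.mul_rpow (by positivity) (by positivity), Real.mul_rpow ht hk, htpow, hwpow]
    _ ≤ t * t ^ (p - 1) * k ^ p * (θ ^ m) ^ (p - 1) * (w ^ (-p)) ^ (p - 1) := by gcongr
    _ = _ := by
        rw [Real.mul_rpow (by positivity) (by positivity), Real.mul_rpow ht (by positivity)]
        ring

/-- The `p`-Dirichlet energy `∫ ‖∇φ‖ ^ p`. -/
def pEnergy [MeasurableSpace V] (μ : Measure V) (p : ℝ) (φ : V → ℝ) : ℝ :=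
  ∫ x, ‖fderiv ℝ φ x‖ ^ p ∂μ

variable {ℓ t : ℝ} {m : ℕ} {θ φ : V → ℝ}

lemma contDiff_loweredCompetitor {n : WithTop ℕ∞} (hφ : ContDiff ℝ n φ) (hθ : ContDiff ℝ n θ)
    (hℓ : ∀ x, φ x < ℓ) : ContDiff ℝ n (loweredCompetitor p ℓ t m θ φ) :=
  hφ.sub (contDiff_const.mul ((hθ.pow m).mul
    ((contDiff_const.sub hφ).rpow_const_of_ne fun x => (sub_pos.2 (hℓ x)).ne')))

lemma fderiv_loweredCompetitor (hp : 1 < p) {x : V} (hφ : DifferentiableAt ℝ φ x)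
    (hθ : DifferentiableAt ℝ θ x) (hℓ : φ x < ℓ) :
    fderiv ℝ (loweredCompetitor p ℓ t m θ φ) x =
      (1 - t * θ x ^ m * (ℓ - φ x) ^ (-p)) • fderiv ℝ φ x -
        (t * (m / (p - 1)) * θ x ^ (m - 1) * (ℓ - φ x) ^ (1 - p)) • fderiv ℝ θ x := by
  have hpow := (hφ.hasFDerivAt.const_sub ℓ).rpow_const (p := 1 - p) (.inl (sub_pos.2 hℓ).ne')
  have hψ := hφ.hasFDerivAt.fun_sub
    (((hθ.hasFDerivAt.pow m).fun_mul hpow).const_mul (t / (p - 1)))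
  have hp0 : p - 1 ≠ 0 := by linarith
  rw [sub_sub_cancel_left] at hψ
  refine hψ.fderiv.trans ?_
  ext v
  simp only [sub_apply, add_apply, smul_apply, neg_apply, smul_eq_mul, nsmul_eq_mul]
  field_simp
  ring

lemma norm_fderiv_log_const_sub {x : V} (hφ : DifferentiableAt ℝ φ x) (hℓ : φ x < ℓ) :
    ‖fderiv ℝ (fun y => Real.log (ℓ - φ y)) x‖ = (ℓ - φ x)⁻¹ * ‖fderiv ℝ φ x‖ := by
  have hw : 0 < ℓ - φ x := sub_pos.2 hℓ
  rw [((hφ.hasFDerivAt.const_sub ℓ).log hw.ne').fderiv, norm_smul, norm_neg,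
    Real.norm_of_nonneg (inv_nonneg.2 hw.le)]

lemma norm_fderiv_loweredCompetitor_rpow_le (hp : 1 < p) (hm : p ≤ m) (ht : 0 ≤ t) {x : V}
    (hφ : DifferentiableAt ℝ φ x) (hθ : DifferentiableAt ℝ θ x) (hθx : θ x ∈ Set.Icc 0 1)
    (hℓ : φ x < ℓ) (htℓ : t ≤ (ℓ - φ x) ^ p) :
    ‖fderiv ℝ (loweredCompetitor p ℓ t m θ φ) x‖ ^ p ≤
      ‖fderiv ℝ φ x‖ ^ p - t * (θ x ^ m * ‖fderiv ℝ (fun y => Real.log (ℓ - φ y)) x‖ ^ p) +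
        t * (m / (p - 1)) ^ p * ‖fderiv ℝ θ x‖ ^ p := by
  have hw : 0 < ℓ - φ x := sub_pos.2 hℓ
  have : 0 < p - 1 := sub_pos.2 hp
  have hθ0 := hθx.1
  have hs : t * θ x ^ m * (ℓ - φ x) ^ (-p) ∈ Set.Icc (0 : ℝ) 1 := by
    refine ⟨by positivity, ?_⟩
    rw [Real.rpow_neg hw.le, ← div_eq_mul_inv, div_le_one (by positivity)]
    exact (mul_le_of_le_one_right ht (pow_le_one₀ hθ0 hθx.2)).trans htℓ
  rw [fderiv_loweredCompetitor hp hφ hθ hℓ]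
  refine (norm_one_sub_smul_sub_smul_rpow_le hp _ _ hs
    (by positivity : 0 ≤ t * (m / (p - 1)) ^ p) ?_).trans_eq ?_
  · rw [abs_of_nonneg (by positivity)]
    exact mul_pow_mul_rpow_rpow_le hp hm (by positivity) ht hθx hw
  · rw [norm_fderiv_log_const_sub hφ hℓ, Real.mul_rpow (by positivity) (norm_nonneg _),
      Real.inv_rpow hw.le, Real.rpow_neg hw.le]
    ring

variable [MeasurableSpace V] [OpensMeasurableSpace V] {μ : Measure V}
  [IsFiniteMeasureOnCompacts μ]

lemma integrable_norm_fderiv_rpow (hp : 0 < p) (hφ : ContDiff ℝ 1 φ) (hφc : HasCompactSupport φ) :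
    Integrable (fun x => ‖fderiv ℝ φ x‖ ^ p) μ :=
  ((hφ.continuous_fderiv one_ne_zero).norm.rpow_const
    fun _ => .inr hp.le).integrable_of_hasCompactSupport
    ((hφc.fderiv (𝕜 := ℝ)).comp_left (g := fun v => ‖v‖ ^ p) (by simp [hp.ne']))

lemma integrable_pow_mul_norm_fderiv_log_rpow (hp : 0 ≤ p) (hm : m ≠ 0) (hφ : ContDiff ℝ 1 φ)
    (hθ : Continuous θ) (hθc : HasCompactSupport θ) (hℓ : ∀ x, φ x < ℓ) :
    Integrable (fun x => θ x ^ m * ‖fderiv ℝ (fun y => Real.log (ℓ - φ y)) x‖ ^ p) μ := by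
  have hlog : ContDiff ℝ 1 fun y => Real.log (ℓ - φ y) :=
    (contDiff_const.sub hφ).log fun x => (sub_pos.2 (hℓ x)).ne'
  refine Continuous.integrable_of_hasCompactSupport ((hθ.pow m).mul
    ((hlog.continuous_fderiv one_ne_zero).norm.rpow_const fun _ => .inr hp)) ?_
  exact (hθc.comp_left (g := (· ^ m)) (zero_pow hm)).mul_right

lemma pEnergy_loweredCompetitor_le (hp : 1 < p) (hm : p ≤ m) (ht : 0 ≤ t) (hφ : ContDiff ℝ 1 φ)
    (hφc : HasCompactSupport φ) (hθ : ContDiff ℝ 1 θ) (hθc : HasCompactSupport θ)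
    (hθ01 : ∀ x, θ x ∈ Set.Icc 0 1) (hℓ : ∀ x, φ x < ℓ) (htℓ : ∀ x, t ≤ (ℓ - φ x) ^ p) :
    pEnergy μ p (loweredCompetitor p ℓ t m θ φ) ≤
      pEnergy μ p φ - t * ∫ x, θ x ^ m * ‖fderiv ℝ (fun y => Real.log (ℓ - φ y)) x‖ ^ p ∂μ +
        t * (m / (p - 1)) ^ p * pEnergy μ p θ := by
  have hp0 : 0 < p := by linarith
  have hm0 : m ≠ 0 := Nat.cast_ne_zero.1 (hp0.trans_le hm).ne'
  have hψc : HasCompactSupport (loweredCompetitor p ℓ t m θ φ) :=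
    (hφc.isCompact.union hθc.isCompact).of_isClosed_subset (isClosed_tsupport _)
      (tsupport_loweredCompetitor_subset hm0 p ℓ t θ φ)
  have hIφ := integrable_norm_fderiv_rpow (μ := μ) hp0 hφ hφc
  have hIθ := integrable_norm_fderiv_rpow (μ := μ) hp0 hθ hθc
  have hIψ := integrable_norm_fderiv_rpow (μ := μ) hp0
    (contDiff_loweredCompetitor (p := p) (t := t) (m := m) hφ hθ hℓ) hψc
  have hIlog := (integrable_pow_mul_norm_fderiv_log_rpow (μ := μ) hp0.le hm0 hφ hθ.continuous hθc
    hℓ).const_mul t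
  simp only [pEnergy, ← integral_const_mul]
  rw [← integral_sub hIφ hIlog, ← integral_add (hIφ.sub' hIlog) (hIθ.const_mul _)]
  exact integral_mono hIψ ((hIφ.sub' hIlog).add (hIθ.const_mul _)) fun x =>
    norm_fderiv_loweredCompetitor_rpow_le hp hm ht (hφ.differentiable one_ne_zero x)
      (hθ.differentiable one_ne_zero x) (hθ01 x) (hℓ x) (htℓ x)

end LogCaccioppoli

lemma setLIntegral_enorm_rpow_le_ofReal_integral {α F : Type*} [MeasurableSpace α]
    [NormedAddCommGroup F] {μ : Measure α} {p : ℝ} (hp : 0 ≤ p) {U : Set α} (hU : MeasurableSet U)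
    {f : α → F} {w : α → ℝ} (hw : ∀ x, 0 ≤ w x) (hwU : ∀ x ∈ U, 1 ≤ w x)
    (hint : Integrable (fun x => w x * ‖f x‖ ^ p) μ) :
    ∫⁻ x in U, ‖f x‖ₑ ^ p ∂μ ≤ ENNReal.ofReal (∫ x, w x * ‖f x‖ ^ p ∂μ) := by
  have hnonneg (x : α) : 0 ≤ w x * ‖f x‖ ^ p := mul_nonneg (hw x) (by positivity)
  calc ∫⁻ x in U, ‖f x‖ₑ ^ p ∂μ ≤ ∫⁻ x in U, ENNReal.ofReal (w x * ‖f x‖ ^ p) ∂μ := by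
        refine setLIntegral_mono' hU fun x hx => ?_
        rw [← ofReal_norm, ENNReal.ofReal_rpow_of_nonneg (norm_nonneg _) hp]
        exact ENNReal.ofReal_le_ofReal (le_mul_of_one_le_left (by positivity) (hwU x hx))
    _ ≤ ∫⁻ x, ENNReal.ofReal (w x * ‖f x‖ ^ p) ∂μ := setLIntegral_le_lintegral _ _
    _ = _ := (ofReal_integral_eq_lintegral_ofReal hint (.of_forall hnonneg)).symm

section Energy

variable {V : Type*} [NormedAddCommGroup V] [NormedSpace ℝ V] [MeasurableSpace V]
  {μ : Measure V} {p : ℝ} {φ : V → ℝ}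

lemma pEnergy_nonneg : 0 ≤ pEnergy μ p φ :=
  integral_nonneg fun _ => by positivity

variable [OpensMeasurableSpace V] [IsFiniteMeasureOnCompacts μ]

lemma pEnergy_comp_le (hp : 0 < p) (hφ : ContDiff ℝ 1 φ) (hφc : HasCompactSupport φ) {F : ℝ → ℝ}
    (hF : Differentiable ℝ F) (hF' : ∀ x, |deriv F x| ≤ 1) :
    pEnergy μ p (F ∘ φ) ≤ pEnergy μ p φ := by
  refine integral_mono_of_nonneg (.of_forall fun _ => by positivity)
    (integrable_norm_fderiv_rpow hp hφ hφc) (.of_forall fun x => ?_)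
  have hchain : fderiv ℝ (F ∘ φ) x = deriv F (φ x) • fderiv ℝ φ x :=
    ((hF (φ x)).hasDerivAt.comp_hasFDerivAt x
      (hφ.differentiable one_ne_zero x).hasFDerivAt).fderiv
  simp only [hchain, norm_smul, Real.norm_eq_abs]
  gcongr
  exact mul_le_of_le_one_left (norm_nonneg _) (hF' _)

end Energy

section Equicontinuity

open Module Metric Topology

lemma exists_pos_forall_abs_sub_le_of_pEnergy_le {V : Type*} [NormedAddCommGroup V]
    [NormedSpace ℝ V] [FiniteDimensional ℝ V] [MeasurableSpace V] [BorelSpace V] (μ : Measure V)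
    [μ.IsAddHaarMeasure] {p : ℝ} (hp : 1 ≤ p) (hVp : finrank ℝ V < p) {B δ : ℝ} (hB : 0 ≤ B)
    (hδ : 0 < δ) :
    ∃ r > 0, ∀ φ : V → ℝ, ContDiff ℝ 1 φ → HasCompactSupport φ → pEnergy μ p φ ≤ B →
      ∀ x, ∀ y ∈ ball x r, |φ x - φ y| ≤ δ := by
  obtain ⟨C, -, hC⟩ := exists_norm_sub_le_mul_rpow_of_mem_ball (F := ℝ) μ hp hVp
  have hexp : 0 < 1 - finrank ℝ V / p := by rw [sub_pos, div_lt_one (by linarith)]; exact hVp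
  have hlim :
      Tendsto (fun r : ℝ => C * r ^ (1 - finrank ℝ V / p) * B ^ (1 / p)) (𝓝[>] 0) (𝓝 0) := by
    have hrpow := (Real.continuousAt_rpow_const 0 (1 - finrank ℝ V / p) (.inr hexp.le)).tendsto
    rw [Real.zero_rpow hexp.ne'] at hrpow
    simpa using ((hrpow.mono_left nhdsWithin_le_nhds).const_mul C).mul_const (B ^ (1 / p))
  obtain ⟨r, hrδ, hr⟩ := ((hlim.eventually_le_const hδ).and self_mem_nhdsWithin).exists
  refine ⟨r, hr, fun φ hφ hφc hφB x y hy => ?_⟩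
  have henergy : ∫⁻ z in ball x r, ‖fderiv ℝ φ z‖ₑ ^ p ∂μ ≤ ENNReal.ofReal (pEnergy μ p φ) := by
    simpa [pEnergy] using setLIntegral_enorm_rpow_le_ofReal_integral (w := fun _ => 1)
      (by linarith) measurableSet_ball (fun _ => zero_le_one) (fun _ _ => le_rfl)
      (by simpa using integrable_norm_fderiv_rpow (μ := μ) (by linarith) hφ hφc)
  exact (hC hφ hr hB (henergy.trans (ENNReal.ofReal_le_ofReal hφB)) (mem_ball_self hr) hy).trans hrδ

end Equicontinuity

/-- The competitors in the definition of `pCapacity`. -/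
structure IsAdmissible {V : Type*} [NormedAddCommGroup V] [NormedSpace ℝ V] (K E : Set V)
    (φ : V → ℝ) : Prop where
  contDiff : ContDiff ℝ (⊤ : ℕ∞) φ
  hasCompactSupport : HasCompactSupport φ
  tsupport_subset : tsupport φ ⊆ E
  one_le : ∀ x ∈ K, 1 ≤ φ x

namespace IsAdmissible

variable {V : Type*} [NormedAddCommGroup V] [NormedSpace ℝ V] {K K' E : Set V} {φ : V → ℝ}

lemma contDiff_one (h : IsAdmissible K E φ) : ContDiff ℝ 1 φ :=
  h.contDiff.of_le (by exact_mod_cast le_top)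

lemma mono (h : IsAdmissible K E φ) (hK : K' ⊆ K) : IsAdmissible K' E φ :=
  { h with one_le := fun x hx => h.one_le x (hK hx) }

lemma smoothTruncation_comp (h : IsAdmissible K E φ) {η : ℝ} (hη : 0 ≤ η) :
    IsAdmissible K E (smoothTruncation η ∘ φ) where
  contDiff := (contDiff_smoothTruncation η).comp h.contDiff
  hasCompactSupport := h.hasCompactSupport.comp_left (smoothTruncation_zero η)
  tsupport_subset := (tsupport_comp_subset (smoothTruncation_zero η) φ).trans h.tsupport_subset
  one_le x hx := by
    simpa [min_eq_right (h.one_le x hx)] using min_one_le_smoothTruncation hη (φ x)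

lemma loweredCompetitor (h : IsAdmissible K E φ) {m : ℕ} (hm : m ≠ 0) {θ : V → ℝ}
    (hθ : ContDiff ℝ (⊤ : ℕ∞) θ) (hθc : HasCompactSupport θ) (hθKE : tsupport θ ⊆ E \ K) {ℓ : ℝ}
    (hℓ : ∀ x, φ x < ℓ) (p t : ℝ) : IsAdmissible K E (loweredCompetitor p ℓ t m θ φ) where
  contDiff := contDiff_loweredCompetitor h.contDiff hθ hℓ
  hasCompactSupport := (h.hasCompactSupport.isCompact.union hθc.isCompact).of_isClosed_subset
    (isClosed_tsupport _) (tsupport_loweredCompetitor_subset hm p ℓ t θ φ)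
  tsupport_subset := (tsupport_loweredCompetitor_subset hm p ℓ t θ φ).trans
    (Set.union_subset h.tsupport_subset (hθKE.trans Set.sdiff_subset))
  one_le x hx := by
    have hθx : θ x = 0 := image_eq_zero_of_notMem_tsupport fun hmem => (hθKE hmem).2 hx
    rw [loweredCompetitor_of_cutoff_eq_zero hm hθx]
    exact h.one_le x hx

end IsAdmissible

lemma exists_isAdmissible {V : Type*} [NormedAddCommGroup V] [NormedSpace ℝ V]
    [FiniteDimensional ℝ V] {K E : Set V} (hK : IsCompact K) (hE : IsOpen E) (hKE : K ⊆ E) :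
    ∃ φ, IsAdmissible K E φ := by
  obtain ⟨L, hL, hKL, hLE⟩ := exists_compact_between hK hE hKE
  obtain ⟨φ, hφ0, hφ1, -⟩ := exists_contMDiffMap_zero_one_of_isClosed
    (modelWithCornersSelf ℝ V) (n := (⊤ : ℕ∞)) isOpen_interior.isClosed_compl hK.isClosed
    (Set.disjoint_compl_left_iff_subset.2 hKL)
  have hsupp : tsupport φ ⊆ L := closure_minimal (fun x hx => interior_subset <| by
    by_contra hmem
    exact hx (hφ0 hmem)) hL.isClosed
  exact ⟨φ, φ.contMDiff.contDiff, hL.of_isClosed_subset (isClosed_tsupport _) hsupp,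
    hsupp.trans hLE, fun x hx => (hφ1 hx).ge⟩

section Capacity

open Metric Set

variable {N : ℕ} {p : ℝ} {K E : Set (EuclideanSpace ℝ (Fin N))}
  {φ : EuclideanSpace ℝ (Fin N) → ℝ}

lemma pCapacity_eq_sInf_image (p : ℝ) (K E : Set (EuclideanSpace ℝ (Fin N))) :
    pCapacity p K E = sInf (pEnergy volume p '' {φ | IsAdmissible K E φ}) := by
  refine congr_arg sInf (Set.ext fun c => ⟨?_, ?_⟩)
  · rintro ⟨φ, hφ, hφc, hφE, hφK, rfl⟩
    exact ⟨φ, ⟨hφ, hφc, hφE, hφK⟩, rfl⟩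
  · rintro ⟨φ, ⟨hφ, hφc, hφE, hφK⟩, rfl⟩
    exact ⟨φ, hφ, hφc, hφE, hφK, rfl⟩

lemma pCapacity_nonneg : 0 ≤ pCapacity p K E := by
  rw [pCapacity_eq_sInf_image]
  exact Real.sInf_nonneg (forall_mem_image.2 fun _ _ => pEnergy_nonneg)

lemma IsAdmissible.pCapacity_le_pEnergy (h : IsAdmissible K E φ) :
    pCapacity p K E ≤ pEnergy volume p φ := by
  rw [pCapacity_eq_sInf_image]
  exact csInf_le ⟨0, forall_mem_image.2 fun _ _ => pEnergy_nonneg⟩ (mem_image_of_mem _ h)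

lemma le_pCapacity (hK : IsCompact K) (hE : IsOpen E) (hKE : K ⊆ E) {b : ℝ}
    (hb : ∀ φ, IsAdmissible K E φ → b ≤ pEnergy volume p φ) : b ≤ pCapacity p K E := by
  rw [pCapacity_eq_sInf_image]
  exact le_csInf (Set.Nonempty.image _ (exists_isAdmissible hK hE hKE)) (forall_mem_image.2 hb)

lemma IsAdmissible.integral_pow_mul_norm_fderiv_log_rpow_le (h : IsAdmissible K E φ) (hp : 1 < p)
    {m : ℕ} (hm : p ≤ m) {θ : EuclideanSpace ℝ (Fin N) → ℝ} (hθ : ContDiff ℝ (⊤ : ℕ∞) θ)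
    (hθc : HasCompactSupport θ) (hθKE : tsupport θ ⊆ E \ K) (hθ01 : ∀ x, θ x ∈ Icc 0 1)
    {ℓ t : ℝ} (hℓ : ∀ x, φ x < ℓ) (ht : 0 < t) (htℓ : ∀ x, t ≤ (ℓ - φ x) ^ p)
    (hmin : pEnergy volume p φ ≤ pCapacity p K E + t) :
    ∫ x, θ x ^ m * ‖fderiv ℝ (fun y => Real.log (ℓ - φ y)) x‖ ^ p ≤
      (m / (p - 1)) ^ p * pEnergy volume p θ + 1 := by
  have hm0 : m ≠ 0 := Nat.cast_ne_zero.1 (by linarith : 0 < (m : ℝ)).ne'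
  have hcap := (h.loweredCompetitor hm0 hθ hθc hθKE hℓ p t).pCapacity_le_pEnergy (p := p)
  have hlow := pEnergy_loweredCompetitor_le (μ := volume) hp hm ht.le h.contDiff_one
    h.hasCompactSupport (hθ.of_le (by exact_mod_cast le_top)) hθc hθ01 hℓ htℓ
  refine le_of_mul_le_mul_left ?_ ht
  linarith

lemma exists_abs_log_sub_log_le_of_closedBall_subset (hp : 1 < p) (hNp : (N : ℝ) < p)
    {c : EuclideanSpace ℝ (Fin N)} {r : ℝ} (hr : 0 < r) (hc : closedBall c (2 * r) ⊆ E \ K) :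
    ∃ M, ∀ φ, IsAdmissible K E φ → ∀ ℓ t, (∀ x, φ x < ℓ) → 0 < t → (∀ x, t ≤ (ℓ - φ x) ^ p) →
      pEnergy volume p φ ≤ pCapacity p K E + t →
      ∀ x ∈ ball c r, ∀ y ∈ ball c r, |Real.log (ℓ - φ x) - Real.log (ℓ - φ y)| ≤ M := by
  let θ : ContDiffBump c := ⟨r, 2 * r, hr, by linarith⟩
  obtain ⟨C, -, hC⟩ := exists_norm_sub_le_mul_rpow_of_mem_ball (F := ℝ)
    (volume : Measure (EuclideanSpace ℝ (Fin N))) hp.le (by simpa using hNp)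
  set B := (⌈p⌉₊ / (p - 1)) ^ p * pEnergy volume p θ + 1
  have hB : 0 ≤ B := by
    have := pEnergy_nonneg (μ := volume) (p := p) (φ := θ)
    have : 0 < p - 1 := sub_pos.2 hp
    positivity
  refine ⟨_, fun φ h ℓ t hℓ ht htℓ hmin x hx y hy =>
    hC (f := fun z => Real.log (ℓ - φ z)) ?_ hr hB ?_ hx hy⟩
  · exact (contDiff_const.sub h.contDiff_one).log fun z => (sub_pos.2 (hℓ z)).ne'
  · have hint := integrable_pow_mul_norm_fderiv_log_rpow (μ := volume) (p := p)
      (by linarith) (Nat.ceil_pos.2 (by linarith : 0 < p)).ne' h.contDiff_one θ.continuous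
      θ.hasCompactSupport hℓ
    have hcaccioppoli := h.integral_pow_mul_norm_fderiv_log_rpow_le hp (Nat.le_ceil p) θ.contDiff
      θ.hasCompactSupport (θ.tsupport_eq.trans_subset hc) (fun z => ⟨θ.nonneg, θ.le_one⟩) hℓ ht
      htℓ hmin
    have hθball : ∀ z ∈ ball c r, 1 ≤ θ z ^ ⌈p⌉₊ := fun z hz => by
      rw [θ.one_of_mem_closedBall (ball_subset_closedBall hz), one_pow]
    exact (setLIntegral_enorm_rpow_le_ofReal_integral (by linarith) measurableSet_ball
      (fun z => pow_nonneg θ.nonneg _) hθball hint).trans (ENNReal.ofReal_le_ofReal hcaccioppoli)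

lemma exists_const_sub_le_mul_const_sub_of_closedBall_subset (hp : 1 < p) (hNp : (N : ℝ) < p)
    {c : EuclideanSpace ℝ (Fin N)} {r : ℝ} (hr : 0 < r) (hc : closedBall c (2 * r) ⊆ E \ K) :
    ∃ C > 0, ∀ φ, IsAdmissible K E φ → ∀ ℓ t, (∀ x, φ x < ℓ) → 0 < t →
      (∀ x, t ≤ (ℓ - φ x) ^ p) → pEnergy volume p φ ≤ pCapacity p K E + t →
      ∀ x ∈ ball c r, ∀ y ∈ ball c r, ℓ - φ x ≤ C * (ℓ - φ y) := by
  obtain ⟨M, hM⟩ := exists_abs_log_sub_log_le_of_closedBall_subset hp hNp hr hc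
  refine ⟨Real.exp M, M.exp_pos, fun φ h ℓ t hℓ ht htℓ hmin x hx y hy => ?_⟩
  have hlog := (abs_le.1 (hM φ h ℓ t hℓ ht htℓ hmin x hx y hy)).2
  rw [← Real.exp_log (sub_pos.2 (hℓ x)), ← Real.exp_log (sub_pos.2 (hℓ y)), ← Real.exp_add]
  exact Real.exp_le_exp.2 (by linarith)

end Capacity

section PotentialLTOne

open Metric Set

variable {N : ℕ} {p : ℝ} {K E : Set (EuclideanSpace ℝ (Fin N))} {x y : EuclideanSpace ℝ (Fin N)}

/-- The `p`-capacitary potential of `K` in `E` is less than `1` at `x`. Since the infimum defining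
`pCapacity` need not be attained by a smooth function, this is expressed by a uniform bound on all
almost minimisers. -/
def PotentialLTOne (p : ℝ) (K E : Set (EuclideanSpace ℝ (Fin N)))
    (x : EuclideanSpace ℝ (Fin N)) : Prop :=
  ∃ η > 0, ∀ φ, IsAdmissible K E φ → pEnergy volume p φ ≤ pCapacity p K E + η → φ x ≤ 1 - η

lemma potentialLTOne_of_notMem (hx : x ∉ E) : PotentialLTOne p K E x := by
  refine ⟨1, one_pos, fun φ h _ => ?_⟩
  rw [image_eq_zero_of_notMem_tsupport fun hmem => hx (h.tsupport_subset hmem), sub_self]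

lemma isOpen_setOf_potentialLTOne (hp : 1 ≤ p) (hNp : (N : ℝ) < p)
    (K E : Set (EuclideanSpace ℝ (Fin N))) : IsOpen {x | PotentialLTOne p K E x} := by
  refine isOpen_iff.2 fun x ⟨η, hη, hx⟩ => ?_
  obtain ⟨r, hr, hosc⟩ := exists_pos_forall_abs_sub_le_of_pEnergy_le
    (volume : Measure (EuclideanSpace ℝ (Fin N))) hp (by simpa using hNp)
    (add_nonneg (pCapacity_nonneg (p := p) (K := K) (E := E)) hη.le) (half_pos hη)
  refine ⟨r, hr, fun y hy => ⟨η / 2, half_pos hη, fun φ h hmin => ?_⟩⟩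
  have hmin' : pEnergy volume p φ ≤ pCapacity p K E + η := by linarith
  have hyx := (abs_le.1 (hosc φ h.contDiff_one h.hasCompactSupport hmin' x y hy)).1
  linarith [hx φ h hmin']

lemma PotentialLTOne.of_mem_ball (hp : 1 < p) (hNp : (N : ℝ) < p)
    {c : EuclideanSpace ℝ (Fin N)} {r : ℝ} (hr : 0 < r) (hc : closedBall c (2 * r) ⊆ E \ K)
    (hxc : x ∈ ball c r) (hyc : y ∈ ball c r) (hx : PotentialLTOne p K E x) :
    PotentialLTOne p K E y := by
  obtain ⟨η, hη, hx⟩ := hx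
  obtain ⟨C, hC, hharnack⟩ := exists_const_sub_le_mul_const_sub_of_closedBall_subset hp hNp hr hc
  set ε := η / (2 * C)
  have hε : 0 < ε := by positivity
  have hCε : C * (2 * ε) = η := by simp only [ε]; field_simp
  refine ⟨min (min η ε) ((ε / 2) ^ p), by positivity, fun φ h hmin => ?_⟩
  set φ' := smoothTruncation (ε / 2) ∘ φ
  have h' : IsAdmissible K E φ' := h.smoothTruncation_comp (half_pos hε).le
  have hφ' (z) : φ' z ≤ 1 + ε / 2 := smoothTruncation_le (half_pos hε) (φ z)
  have hmin' : pEnergy volume p φ' ≤ pCapacity p K E + min (min η ε) ((ε / 2) ^ p) :=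
    (pEnergy_comp_le (by linarith) h.contDiff_one h.hasCompactSupport
      (differentiable_smoothTruncation _) fun z => abs_le.2
        ⟨by linarith [(deriv_smoothTruncation_mem_Icc (ε / 2) z).1],
          (deriv_smoothTruncation_mem_Icc (ε / 2) z).2⟩).trans hmin
  have hx' : φ' x ≤ 1 - η := hx φ' h' (hmin'.trans (by grw [min_le_left, min_le_left]))
  have hy' : φ' y ≤ 1 - ε := by
    have hxy : 1 + ε - φ' x ≤ C * (1 + ε - φ' y) := by
      refine hharnack φ' h' (1 + ε) ((ε / 2) ^ p) (fun z => by linarith [hφ' z]) (by positivity)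
        (fun z => ?_) (hmin'.trans (by grw [min_le_right])) x hxc y hyc
      gcongr
      linarith [hφ' z]
    have : C * (2 * ε) < C * (1 + ε - φ' y) := by linarith
    linarith [lt_of_mul_lt_mul_left this hC.le]
  have hφy : φ y ≤ 1 - ε := by
    have hmin1 : min (φ y) 1 ≤ 1 - ε := (min_one_le_smoothTruncation (half_pos hε).le _).trans hy'
    exact (min_le_iff.1 hmin1).resolve_right (by linarith)
  linarith [(min_le_left (min η ε) ((ε / 2) ^ p)).trans (min_le_right _ _)]

lemma subset_setOf_potentialLTOne_of_isPreconnected (hp : 1 < p) (hNp : (N : ℝ) < p) (hE : IsOpen E)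
    (hK : IsClosed K) {A : Set (EuclideanSpace ℝ (Fin N))} (hA : IsPreconnected A) (hAK : A ⊆ Kᶜ)
    (hAE : ¬ A ⊆ E) : A ⊆ {x | PotentialLTOne p K E x} := by
  obtain ⟨z, hzA, hzE⟩ := not_subset.1 hAE
  refine hA.subset_of_closure_inter_subset (isOpen_setOf_potentialLTOne hp.le hNp K E)
    ⟨z, hzA, potentialLTOne_of_notMem hzE⟩ fun y ⟨hycl, hyA⟩ => ?_
  by_cases hyE : y ∈ E
  · obtain ⟨ρ, hρ, hball⟩ := nhds_basis_closedBall.mem_iff.1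
      ((hE.sdiff hK).mem_nhds ⟨hyE, hAK hyA⟩)
    obtain ⟨x, hx, hyx⟩ := mem_closure_iff.1 hycl (ρ / 2) (half_pos hρ)
    exact PotentialLTOne.of_mem_ball hp hNp (half_pos hρ) (by rwa [mul_div_cancel₀ _ two_ne_zero])
      (mem_ball'.2 hyx) (mem_ball_self (half_pos hρ)) hx
  · exact potentialLTOne_of_notMem hyE

lemma PotentialLTOne.pCapacity_lt (hx : PotentialLTOne p K E x) (hE : IsOpen E) (hK : IsCompact K)
    (hsub : K ∪ {x} ⊆ E) : pCapacity p K E < pCapacity p (K ∪ {x}) E := by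
  obtain ⟨η, hη, hx⟩ := hx
  refine (lt_add_of_pos_right _ hη).trans_le
    (le_pCapacity (hK.union isCompact_singleton) hE hsub fun φ h => ?_)
  by_contra! hlt
  linarith [hx φ (h.mono subset_union_left) hlt.le, h.one_le x (.inr rfl)]

end PotentialLTOne

lemma not_connectedComponentIn_compl_subset_of_isBounded {V : Type*} [NormedAddCommGroup V]
    [NormedSpace ℝ V] (hV : 1 < Module.rank ℝ V) {S B : Set V} (hS : S.Countable)
    (hB : Bornology.IsBounded B) {a : V} (ha : a ∉ S) : ¬ connectedComponentIn Sᶜ a ⊆ B := by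
  intro h
  have := rank_pos_iff_nontrivial.1 (zero_lt_one.trans hV)
  rw [(hS.isConnected_compl_of_one_lt_rank hV).isPreconnected.connectedComponentIn ha] at h
  refine NormedSpace.unbounded_univ ℝ V ?_
  rw [← (hS.dense_compl ℝ).closure_eq]
  exact (hB.subset h).closure

theorem capacity_strict_mono_add_point_general {N : ℕ} {p : ℝ} (hp : (N : ℝ) < p)
    {K E : Set (EuclideanSpace ℝ (Fin N))} (hE : IsOpen E) (hK : IsCompact K)
    {a : EuclideanSpace ℝ (Fin N)} (hsub : K ∪ {a} ⊆ E)
    (hcomp : ¬ connectedComponentIn Kᶜ a ⊆ E) : pCapacity p K E < pCapacity p (K ∪ {a}) E := by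
  have haE : a ∈ E := hsub (.inr rfl)
  have haK : a ∈ Kᶜ := by
    by_contra h
    exact hcomp (by simp [connectedComponentIn_eq_empty h])
  have hN : N ≠ 0 := by
    rintro rfl
    exact hcomp fun x _ => Subsingleton.elim a x ▸ haE
  have hp1 : 1 < p := (Nat.one_le_cast.2 (Nat.one_le_iff_ne_zero.2 hN)).trans_lt hp
  have hpot : PotentialLTOne p K E a := subset_setOf_potentialLTOne_of_isPreconnected hp1 hp hE
    hK.isClosed isPreconnected_connectedComponentIn (connectedComponentIn_subset _ _) hcomp
    (mem_connectedComponentIn haK)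
  exact hpot.pCapacity_lt hE hK hsub

/-- For `p > N`, the relative `p`-capacity of a finite set of points in `B_R` strictly
increases when an extra point is added. -/
theorem capacity_strict_mono_add_point (N : ℕ) (p R : ℝ)
    (hN : 2 ≤ N) (hp : (N:ℝ) < p) (hR : 0 < R)
    (S : Finset (EuclideanSpace ℝ (Fin N))) (hS : S.Nonempty)
    (a : EuclideanSpace ℝ (Fin N)) (ha : a ∉ S)
    (hsub : (↑S : Set (EuclideanSpace ℝ (Fin N))) ∪ {a} ⊆ Metric.ball 0 R) :
    pCapacity p (S : Set (EuclideanSpace ℝ (Fin N))) (Metric.ball 0 R) <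
      pCapacity p ((↑S : Set (EuclideanSpace ℝ (Fin N))) ∪ {a}) (Metric.ball 0 R) :=
  capacity_strict_mono_add_point_general hp Metric.isOpen_ball S.finite_toSet.isCompact hsub <|
    not_connectedComponentIn_compl_subset_of_isBounded
      (Module.lt_rank_of_lt_finrank (by rwa [finrank_euclideanSpace_fin])) S.countable_toSet
      Metric.isBounded_ball ha
end
end

section
/- Let 1 < p < N, let Ω = ℝ^{N-1}×(−1,1) ⊆ ℝ^N be the open slab, and let 0 < γ < 1. Then the (p,γ)-capacitary inradius of Ω is finite: R_{p,γ}(Ω) < +∞. -/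
open MeasureTheory Filter
open scoped ENNReal

noncomputable section

/-- `closedBall x₀ r \ Ω` is `(p,γ)`-negligible. -/
def IsNegligible {N : ℕ} (p γ : ℝ) (Ω : Set (EuclideanSpace ℝ (Fin N)))
    (x₀ : EuclideanSpace ℝ (Fin N)) (r : ℝ) : Prop :=
  pCapacity p (Metric.closedBall x₀ r \ Ω) (Metric.ball x₀ (2*r)) ≤
    γ * pCapacity p (Metric.closedBall x₀ r) (Metric.ball x₀ (2*r))

/-- The `(p,γ)`-capacitary inradius of an open set, as an extended nonnegative real. -/
noncomputable def capInradius {N : ℕ} (p γ : ℝ) (Ω : Set (EuclideanSpace ℝ (Fin N))) : ℝ≥0∞ :=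
  sSup {ρ : ℝ≥0∞ | ∃ r : ℝ, 0 < r ∧ ρ = ENNReal.ofReal r ∧
    ∃ x₀ : EuclideanSpace ℝ (Fin N), IsNegligible p γ Ω x₀ r}

/-!
Every capacity here is compared with that of the ball one direction at a time. If a test function
`φ` is at least `1` at `x₀ + rθ`, then its profile along the ray `t ↦ x₀ + tθ`, set to `1` for
`t ≤ r`, truncated smoothly and rotated about `x₀`, competes for the capacity of the closed ball
`B_r(x₀)`. So each direction `θ` in which `K ⊆ B_r(x₀)` meets the sphere of radius `r` contributes
to the energy of `φ` at least its share `cap(B_r) / σ(𝕊)`, where `σ` is the surface measure of the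
unit sphere `𝕊`; hence `cap(K) / cap(B_r)` is at least the proportion of such directions. If
`B_r(x₀) \ Ω` is negligible, at most a proportion `γ` of the sphere of radius `r` lies outside `Ω`.
Seen from `x₀`, a slab occupies a strip of latitudes of width of order `1 / r`. As single latitudes
are `σ`-null and `𝕊` is compact, the measure of the strip tends to `0` as `r → ∞`, uniformly in
`x₀`, which rules out large radii.
-/

open Set Metric Module Topology
open scoped ContDiff RealInnerProductSpace

section PolarCoordinates

variable {E : Type*} [NormedAddCommGroup E] [NormedSpace ℝ E] [FiniteDimensional ℝ E]
  [MeasurableSpace E] [BorelSpace E] [Nontrivial E]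

theorem lintegral_eq_lintegral_toSphere (μ : Measure E) [μ.IsAddHaarMeasure]
    {f : E → ℝ≥0∞} (hf : Measurable f) :
    ∫⁻ x, f x ∂μ = ∫⁻ θ : sphere (0 : E) 1, (∫⁻ t in Ioi (0 : ℝ),
      ENNReal.ofReal (t ^ (finrank ℝ E - 1)) * f (t • (θ : E))) ∂μ.toSphere := by
  have hpolar : Measurable fun q : sphere (0 : E) 1 × Ioi (0 : ℝ) => f ((q.2 : ℝ) • (q.1 : E)) :=
    hf.comp (by fun_prop)
  have hsymm := (Measure.measurePreserving_homeomorphUnitSphereProd μ).symm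
    (homeomorphUnitSphereProd E).toMeasurableEquiv
  calc
    ∫⁻ x, f x ∂μ = ∫⁻ x : ({0}ᶜ : Set E), f x ∂μ.comap (↑) := by
      rw [lintegral_subtype_comap (measurableSet_singleton (0 : E)).compl, restrict_compl_singleton]
    _ = ∫⁻ q : sphere (0 : E) 1 × Ioi (0 : ℝ), f ((q.2 : ℝ) • (q.1 : E))
          ∂μ.toSphere.prod (Measure.volumeIoiPow (finrank ℝ E - 1)) :=
      (hsymm.lintegral_comp_emb (homeomorphUnitSphereProd E).symm.measurableEmbedding _).symm
    _ = ∫⁻ θ : sphere (0 : E) 1, ∫⁻ t : Ioi (0 : ℝ), f ((t : ℝ) • (θ : E))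
          ∂Measure.volumeIoiPow (finrank ℝ E - 1) ∂μ.toSphere :=
      lintegral_prod _ hpolar.aemeasurable
    _ = _ := lintegral_congr fun θ => by
      have hray : Measurable fun t : Ioi (0 : ℝ) => f ((t : ℝ) • (θ : E)) := hf.comp (by fun_prop)
      rw [Measure.volumeIoiPow, lintegral_withDensity_eq_lintegral_mul _ (by fun_prop) hray,
        ← lintegral_subtype_comap measurableSet_Ioi]
      rfl

end PolarCoordinates

section LevelSets

theorem exists_pos_forall_measure_preimage_ball_lt {X Y : Type*} [TopologicalSpace X]
    [CompactSpace X] [MeasurableSpace X] [BorelSpace X] [MetricSpace Y] [MeasurableSpace Y]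
    [BorelSpace Y] {μ : Measure X} [IsFiniteMeasure μ] {f : X → Y} (hf : Continuous f)
    (hfiber : ∀ y, μ (f ⁻¹' {y}) = 0) {ε : ℝ≥0∞} (hε : 0 < ε) :
    ∃ δ > 0, ∀ y, μ (f ⁻¹' ball y δ) < ε := by
  have hnhds : ∀ y, ∃ U, {y} ⊆ U ∧ IsOpen U ∧ μ.map f U < ε := fun y =>
    exists_isOpen_lt_of_lt _ _ <| by
      rwa [Measure.map_apply hf.measurable (measurableSet_singleton y), hfiber]
  choose U hyU hUopen hUε using hnhds
  obtain ⟨δ, hδ, hδU⟩ := lebesgue_number_lemma_of_metric (isCompact_range hf) hUopen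
    fun y _ => mem_iUnion.2 ⟨y, hyU y rfl⟩
  refine ⟨δ / 2, half_pos hδ, fun y => ?_⟩
  rcases (f ⁻¹' ball y (δ / 2)).eq_empty_or_nonempty with hempty | ⟨x, hx⟩
  · simpa [hempty] using hε
  · obtain ⟨z, hz⟩ := hδU (f x) (mem_range_self x)
    have hball : ball y (δ / 2) ⊆ U z :=
      (ball_subset_ball' (by linarith [mem_ball'.1 hx])).trans hz
    calc
      μ (f ⁻¹' ball y (δ / 2)) ≤ μ (f ⁻¹' U z) := measure_mono (preimage_mono hball)
      _ = μ.map f (U z) := (Measure.map_apply hf.measurable (hUopen z).measurableSet).symm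
      _ < ε := hUε z

theorem finite_setOf_quadratic_eq_zero {R : Type*} [CommRing R] [IsDomain R] {a b c : R}
    (ha : a ≠ 0) : {t : R | a * t ^ 2 + b * t + c = 0}.Finite := by
  open Polynomial in
  have hne : C a * X ^ 2 + C b * X + C c ≠ 0 := by
    intro h
    simpa [h] using degree_quadratic (b := b) (c := c) ha
  simpa [IsRoot] using Polynomial.finite_setOfPred_isRoot hne

variable {E : Type*} [NormedAddCommGroup E] [InnerProductSpace ℝ E] [FiniteDimensional ℝ E]

theorem exists_inner_sq_ne (hE : 1 < finrank ℝ E) {v : E} (hv : v ≠ 0) (a : ℝ) :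
    ∃ u : E, ⟪v, u⟫ ^ 2 ≠ a ^ 2 * ‖u‖ ^ 2 := by
  rcases eq_or_ne a 0 with rfl | ha
  · exact ⟨v, by simpa using hv⟩
  · have hdim := (ℝ ∙ v).finrank_add_finrank_orthogonal
    rw [finrank_span_singleton hv] at hdim
    have : Nontrivial (ℝ ∙ v)ᗮ := nontrivial_of_finrank_pos (R := ℝ) (by omega)
    obtain ⟨u, hu⟩ := exists_ne (0 : (ℝ ∙ v)ᗮ)
    have hvu : ⟪v, (u : E)⟫ = 0 := Submodule.mem_orthogonal_singleton_iff_inner_right.1 u.2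
    exact ⟨u, by simpa [hvu, eq_comm, ha] using hu⟩

variable [MeasurableSpace E] [BorelSpace E]

theorem measure_setOf_inner_eq_mul_norm (μ : Measure E) [μ.IsAddHaarMeasure]
    (hE : 1 < finrank ℝ E) {v : E} (hv : v ≠ 0) (a : ℝ) :
    μ {x | ⟪v, x⟫ = a * ‖x‖} = 0 := by
  -- On each line in the direction `u`, the squared equation is a genuine quadratic.
  obtain ⟨u, hu⟩ := exists_inner_sq_ne hE hv a
  have hopen : IsOpen {x : E | ⟪v, x⟫ ≠ a * ‖x‖} := isOpen_ne_fun (by fun_prop) (by fun_prop)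
  suffices h : ∀ᵐ x ∂μ, x ∈ {x : E | ⟪v, x⟫ ≠ a * ‖x‖} by
    simpa [ae_iff] using h
  refine ae_mem_of_ae_add_linearMap_mem (LinearMap.toSpanSingleton ℝ E u) volume μ
    hopen.measurableSet fun y => ?_
  have hfin : {t : ℝ | (⟪v, u⟫ ^ 2 - a ^ 2 * ‖u‖ ^ 2) * t ^ 2 +
      2 * (⟪v, y⟫ * ⟪v, u⟫ - a ^ 2 * ⟪y, u⟫) * t + (⟪v, y⟫ ^ 2 - a ^ 2 * ‖y‖ ^ 2) = 0}.Finite :=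
    finite_setOf_quadratic_eq_zero (sub_ne_zero.2 hu)
  refine measure_mono_null (fun t ht => ?_) (hfin.measure_zero volume)
  have hsq : (⟪v, y⟫ + t * ⟪v, u⟫) ^ 2 = a ^ 2 * ‖y + t • u‖ ^ 2 := by
    have ht' : ⟪v, y⟫ + t * ⟪v, u⟫ = a * ‖y + t • u‖ := by
      simpa [inner_add_right, inner_smul_right] using ht
    rw [ht', mul_pow]
  rw [norm_add_sq_real, inner_smul_right, norm_smul, mul_pow, Real.norm_eq_abs, sq_abs] at hsq
  simp only [mem_ofPred_eq]
  linear_combination hsq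

theorem toSphere_setOf_inner_eq (μ : Measure E) [μ.IsAddHaarMeasure]
    (hE : 1 < finrank ℝ E) {v : E} (hv : v ≠ 0) (a : ℝ) :
    μ.toSphere {θ | ⟪v, (θ : E)⟫ = a} = 0 := by
  have hclosed : IsClosed {θ : sphere (0 : E) 1 | ⟪v, (θ : E)⟫ = a} :=
    isClosed_eq (by fun_prop) (by fun_prop)
  rw [Measure.toSphere_apply' _ hclosed.measurableSet]
  refine mul_eq_zero_of_right _ (measure_mono_null ?_ (measure_setOf_inner_eq_mul_norm μ hE hv a))
  rintro _ ⟨t, ht, _, ⟨θ, hθ : ⟪v, (θ : E)⟫ = a, rfl⟩, rfl⟩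
  simp [inner_smul_right, norm_smul, abs_of_pos ht.1, hθ, mul_comm]

theorem exists_pos_forall_toSphere_abs_inner_sub_lt (μ : Measure E) [μ.IsAddHaarMeasure]
    (hE : 1 < finrank ℝ E) {v : E} (hv : v ≠ 0) {ε : ℝ≥0∞} (hε : 0 < ε) :
    ∃ δ > 0, ∀ a, μ.toSphere {θ | |⟪v, (θ : E)⟫ - a| < δ} < ε :=
  exists_pos_forall_measure_preimage_ball_lt (f := fun θ : sphere (0 : E) 1 => ⟪v, (θ : E)⟫)
    (by fun_prop) (toSphere_setOf_inner_eq μ hE hv) hε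

end LevelSets

section RayEnergy

variable {E : Type*} [NormedAddCommGroup E] [NormedSpace ℝ E]

/-- The class of test functions in the definition of the capacity of `K` relative to `U`. -/
structure IsCapacityTestFunction (K U : Set E) (φ : E → ℝ) : Prop where
  contDiff : ContDiff ℝ ∞ φ
  hasCompactSupport : HasCompactSupport φ
  tsupport_subset : tsupport φ ⊆ U
  one_le : ∀ x ∈ K, 1 ≤ φ x

/-- The `p`-Dirichlet energy of `φ`. It takes values in `ℝ≥0∞`, so that bounds along single rays
integrate over the sphere without integrability side conditions. -/
def dirichletEnergy [MeasurableSpace E] (μ : Measure E) (p : ℝ) (φ : E → ℝ) : ℝ≥0∞ :=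
  ∫⁻ x, ‖fderiv ℝ φ x‖ₑ ^ p ∂μ

/-- The `p`-energy of `φ` along the part of the ray `x₀ + tθ` where `t > r`, weighted by the
Jacobian `t ^ (dim E - 1)` of polar coordinates. The full gradient of `φ` enters, not only its
component along the ray. -/
def rayEnergy (p : ℝ) (φ : E → ℝ) (x₀ : E) (r : ℝ) (θ : E) : ℝ≥0∞ :=
  ∫⁻ t in Ioi r, ENNReal.ofReal (t ^ (finrank ℝ E - 1)) * ‖fderiv ℝ φ (x₀ + t • θ)‖ₑ ^ p

theorem ofReal_integral_norm_fderiv_rpow [MeasurableSpace E] [OpensMeasurableSpace E]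
    {μ : Measure E} [IsFiniteMeasureOnCompacts μ] {p : ℝ} (hp : 0 < p) {φ : E → ℝ}
    (hφ : ContDiff ℝ 1 φ) (hsupp : HasCompactSupport φ) :
    ENNReal.ofReal (∫ x, ‖fderiv ℝ φ x‖ ^ p ∂μ) = dirichletEnergy μ p φ := by
  have hcont : Continuous fun x => ‖fderiv ℝ φ x‖ ^ p :=
    (hφ.continuous_fderiv one_ne_zero).norm.rpow_const fun _ => Or.inr hp.le
  have hint : Integrable (fun x => ‖fderiv ℝ φ x‖ ^ p) μ :=
    hcont.integrable_of_hasCompactSupport <|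
      (hsupp.fderiv (𝕜 := ℝ)).comp_left (g := fun v => ‖v‖ ^ p) (by simp [hp.ne'])
  rw [ofReal_integral_eq_lintegral_ofReal hint (ae_of_all _ fun x => by positivity)]
  refine lintegral_congr fun x => ?_
  rw [← ENNReal.ofReal_rpow_of_nonneg (norm_nonneg _) hp.le, ofReal_norm]

section Polar

variable [FiniteDimensional ℝ E] [MeasurableSpace E] [BorelSpace E] [Nontrivial E]
  (μ : Measure E) [μ.IsAddHaarMeasure]

theorem dirichletEnergy_eq_lintegral_rayEnergy (p : ℝ) (φ : E → ℝ) (x₀ : E) :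
    dirichletEnergy μ p φ = ∫⁻ θ : sphere (0 : E) 1, rayEnergy p φ x₀ 0 θ ∂μ.toSphere := by
  have hmeas : Measurable fun x => ‖fderiv ℝ φ (x₀ + x)‖ₑ ^ p :=
    (((measurable_fderiv ℝ φ).comp (measurable_const_add x₀)).enorm).pow_const p
  rw [dirichletEnergy, ← lintegral_add_left_eq_self _ x₀, lintegral_eq_lintegral_toSphere μ hmeas]
  rfl

theorem mul_toSphere_le_dirichletEnergy {p : ℝ} {φ : E → ℝ} (x₀ : E) {r : ℝ} (hr : 0 ≤ r)
    {S : Set (sphere (0 : E) 1)} (hS : MeasurableSet S) {c : ℝ≥0∞}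
    (hc : ∀ θ ∈ S, c ≤ rayEnergy p φ x₀ r θ) :
    c * μ.toSphere S ≤ dirichletEnergy μ p φ := by
  rw [dirichletEnergy_eq_lintegral_rayEnergy μ p φ x₀, ← setLIntegral_const]
  exact (setLIntegral_mono' hS fun θ hθ =>
    (hc θ hθ).trans (lintegral_mono_set (Ioi_subset_Ioi hr))).trans (setLIntegral_le_lintegral S _)

end Polar

theorem hasDerivAt_comp_ray {φ : E → ℝ} (hφ : Differentiable ℝ φ) (x₀ θ : E) (t : ℝ) :
    HasDerivAt (fun s : ℝ => φ (x₀ + s • θ)) (fderiv ℝ φ (x₀ + t • θ) θ) t := by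
  have hray : HasDerivAt (fun s : ℝ => x₀ + s • θ) θ t := by
    simpa using ((hasDerivAt_id t).smul_const θ).const_add x₀
  exact (hφ _).hasFDerivAt.comp_hasDerivAt t hray

theorem enorm_deriv_comp_ray_le {φ : E → ℝ} (hφ : Differentiable ℝ φ) (x₀ : E) {θ : E}
    (hθ : ‖θ‖ = 1) (t : ℝ) :
    ‖deriv (fun s : ℝ => φ (x₀ + s • θ)) t‖ₑ ≤ ‖fderiv ℝ φ (x₀ + t • θ)‖ₑ := by
  rw [(hasDerivAt_comp_ray hφ x₀ θ t).deriv, enorm_le_iff_norm_le]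
  exact (fderiv ℝ φ (x₀ + t • θ)).unit_le_opNorm θ hθ.le

theorem add_smul_mem_ball_iff {x₀ θ : E} (hθ : ‖θ‖ = 1) {t ρ : ℝ} (ht : 0 ≤ t) :
    x₀ + t • θ ∈ ball x₀ ρ ↔ t < ρ := by
  rw [mem_ball_iff_norm, add_sub_cancel_left, norm_smul, hθ, mul_one, Real.norm_of_nonneg ht]

theorem one_le_lintegral_enorm_fderiv_ray {φ : E → ℝ} (hφ : ContDiff ℝ 1 φ) {x₀ θ : E}
    (hθ : ‖θ‖ = 1) {r ρ : ℝ} (hrρ : r ≤ ρ) (hone : 1 ≤ φ (x₀ + r • θ))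
    (hzero : φ (x₀ + ρ • θ) = 0) :
    1 ≤ ∫⁻ t in Icc r ρ, ‖fderiv ℝ φ (x₀ + t • θ)‖ₑ := by
  have hray : ContDiff ℝ 1 fun t : ℝ => φ (x₀ + t • θ) := hφ.comp (by fun_prop)
  calc
    1 ≤ ‖φ (x₀ + ρ • θ) - φ (x₀ + r • θ)‖ₑ := by
      rw [hzero, zero_sub, enorm_neg, ← enorm_one (G := ℝ), enorm_le_iff_norm_le, norm_one]
      exact hone.trans (le_abs_self _)
    _ ≤ ∫⁻ t in Icc r ρ, ‖deriv (fun s : ℝ => φ (x₀ + s • θ)) t‖ₑ :=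
      enorm_sub_le_lintegral_deriv_of_contDiffOn_Icc hray.contDiffOn hrρ
    _ ≤ _ := lintegral_mono fun t => enorm_deriv_comp_ray_le (hφ.differentiable one_ne_zero) x₀ hθ t

theorem lintegral_enorm_rpow_le_mul {α F : Type*} [MeasurableSpace α] [NormedAddCommGroup F]
    {μ : Measure α} {f : α → F} (hf : AEStronglyMeasurable f μ) {p : ℝ} (hp : 1 ≤ p) :
    (∫⁻ a, ‖f a‖ₑ ∂μ) ^ p ≤ (∫⁻ a, ‖f a‖ₑ ^ p ∂μ) * μ univ ^ (p - 1) := by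
  have hp0 : 0 < p := one_pos.trans_le hp
  have h := ENNReal.rpow_le_rpow (eLpNorm'_le_eLpNorm'_mul_rpow_measure_univ one_pos hp hf) hp0.le
  rw [ENNReal.mul_rpow_of_nonneg _ _ hp0.le, ← ENNReal.rpow_mul] at h
  simpa [eLpNorm', ← ENNReal.rpow_mul, sub_mul, hp0.ne'] using h

theorem ofReal_pow_le_mul_rayEnergy {p : ℝ} (hp : 1 ≤ p) {φ : E → ℝ} (hφ : ContDiff ℝ 1 φ)
    {x₀ θ : E} (hθ : ‖θ‖ = 1) {r ρ : ℝ} (hr : 0 ≤ r) (hrρ : r ≤ ρ)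
    (hone : 1 ≤ φ (x₀ + r • θ)) (hzero : φ (x₀ + ρ • θ) = 0) :
    ENNReal.ofReal (r ^ (finrank ℝ E - 1)) ≤
      ENNReal.ofReal (ρ - r) ^ (p - 1) * rayEnergy p φ x₀ r θ := by
  have hcont : Continuous fun t : ℝ => fderiv ℝ φ (x₀ + t • θ) :=
    (hφ.continuous_fderiv one_ne_zero).comp (by fun_prop)
  set w := ENNReal.ofReal (r ^ (finrank ℝ E - 1))
  set V := ENNReal.ofReal (ρ - r) ^ (p - 1)
  calc
    w ≤ w * (∫⁻ t in Icc r ρ, ‖fderiv ℝ φ (x₀ + t • θ)‖ₑ) ^ p :=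
      le_mul_of_one_le_right' <| ENNReal.one_le_rpow
        (one_le_lintegral_enorm_fderiv_ray hφ hθ hrρ hone hzero) (one_pos.trans_le hp)
    _ ≤ w * ((∫⁻ t in Icc r ρ, ‖fderiv ℝ φ (x₀ + t • θ)‖ₑ ^ p) * V) := by
      gcongr
      simpa using lintegral_enorm_rpow_le_mul (μ := volume.restrict (Icc r ρ))
        hcont.aestronglyMeasurable hp
    _ = V * ∫⁻ t in Icc r ρ, w * ‖fderiv ℝ φ (x₀ + t • θ)‖ₑ ^ p := by
      rw [lintegral_const_mul' _ _ ENNReal.ofReal_ne_top]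
      ring
    _ ≤ V * ∫⁻ t in Icc r ρ,
          ENNReal.ofReal (t ^ (finrank ℝ E - 1)) * ‖fderiv ℝ φ (x₀ + t • θ)‖ₑ ^ p := by
      gcongr V * ?_
      refine setLIntegral_mono' measurableSet_Icc fun t ht => ?_
      gcongr
      exact ENNReal.ofReal_le_ofReal (pow_le_pow_left₀ hr ht.1 _)
    _ ≤ V * rayEnergy p φ x₀ r θ := by
      rw [rayEnergy, setLIntegral_congr Ioi_ae_eq_Ici]
      gcongr
      exact Icc_subset_Ici_self

end RayEnergy

section Truncation

theorem contDiff_intervalIntegral {f : ℝ → ℝ} (hf : ContDiff ℝ ∞ f) (a : ℝ) :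
    ContDiff ℝ ∞ fun t => ∫ s in a..t, f s := by
  have hderiv := fun t => hf.continuous.integral_hasStrictDerivAt a t
  refine contDiff_infty_iff_deriv.2 ⟨fun t => (hderiv t).hasDerivAt.differentiableAt, ?_⟩
  rwa [funext fun t => (hderiv t).hasDerivAt.deriv]

theorem exists_contDiff_truncation {L : ℝ} (hL : 1 < L) :
    ∃ H : ℝ → ℝ, ContDiff ℝ ∞ H ∧ H 0 = 0 ∧ (∀ t ≥ 1, H =ᶠ[𝓝 t] fun _ => 1) ∧
      ∀ t, ‖deriv H t‖ ≤ L := by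
  have hL0 : 0 < L := one_pos.trans hL
  obtain ⟨b, hLb, hb⟩ := exists_between
    (div_lt_div_of_pos_right (inv_lt_one_of_one_lt₀ hL) two_pos)
  let χ : ContDiffBump (1 / 2 : ℝ) := ⟨L⁻¹ / 2, b, half_pos (inv_pos.2 hL0), hLb⟩
  have hsmooth : ContDiff ℝ ∞ (χ.normed volume) := χ.contDiff_normed
  have hsupp : Function.support (χ.normed volume) = Ioo (1 / 2 - b) (1 / 2 + b) := by
    rw [χ.support_normed_eq, Real.ball_eq_Ioo]
  have hsup (t : ℝ) : χ.normed volume t ≤ L := by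
    refine (χ.normed_le_div_measure_closedBall_rIn volume t).trans_eq ?_
    rw [Real.volume_real_closedBall χ.rIn_pos.le, mul_div_cancel₀ _ two_ne_zero, one_div, inv_inv]
  refine ⟨fun t => ∫ s in (0 : ℝ)..t, χ.normed volume s, contDiff_intervalIntegral hsmooth 0,
    intervalIntegral.integral_same, fun t ht => ?_, fun t => ?_⟩
  · filter_upwards [lt_mem_nhds (show 1 / 2 + b < t by linarith)] with s hs
    rw [intervalIntegral.integral_eq_integral_of_support_subset, χ.integral_normed]
    rw [hsupp]
    exact fun u hu => ⟨by linarith [hu.1], by linarith [hu.2]⟩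
  · rw [(hsmooth.continuous.integral_hasStrictDerivAt 0 t).hasDerivAt.deriv,
      Real.norm_of_nonneg (χ.nonneg_normed t)]
    exact hsup t

theorem contDiff_ite_le {n : WithTop ℕ∞} {f : ℝ → ℝ} {r c : ℝ} (hf : ContDiff ℝ n f)
    (hr : f =ᶠ[𝓝 r] fun _ => c) : ContDiff ℝ n fun t => if t ≤ r then c else f t := by
  refine contDiff_iff_contDiffAt.2 fun t => ?_
  rcases lt_trichotomy t r with ht | rfl | ht
  · refine (contDiffAt_const (c := c)).congr_of_eventuallyEq ?_
    filter_upwards [gt_mem_nhds ht] with s hs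
    exact if_pos hs.le
  · refine (contDiffAt_const (c := c)).congr_of_eventuallyEq ?_
    filter_upwards [hr] with s hs
    rw [hs, ite_self]
  · refine hf.contDiffAt.congr_of_eventuallyEq ?_
    filter_upwards [lt_mem_nhds ht] with s hs
    exact if_neg hs.not_ge

variable {E : Type*} [NormedAddCommGroup E] [NormedSpace ℝ E]

theorem exists_truncated_profile [ProperSpace E] {φ : E → ℝ} (hφ : ContDiff ℝ ∞ φ) {x₀ : E} {ρ : ℝ}
    (hsupp : tsupport φ ⊆ ball x₀ ρ) {θ : E} (hθ : ‖θ‖ = 1) {r : ℝ} (hr : 0 ≤ r)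
    (hone : 1 ≤ φ (x₀ + r • θ)) {L : ℝ} (hL : 1 < L) :
    ∃ f : ℝ → ℝ, ContDiff ℝ ∞ f ∧ (∀ t ≤ r, f t = 1) ∧ (∃ R < ρ, ∀ t ≥ R, f t = 0) ∧
      ∀ t > r, ‖deriv f t‖ₑ ≤ ENNReal.ofReal L * ‖fderiv ℝ φ (x₀ + t • θ)‖ₑ := by
  obtain ⟨H, hH, hH0, hH1, hHL⟩ := exists_contDiff_truncation hL
  have hray : ContDiff ℝ ∞ fun t : ℝ => φ (x₀ + t • θ) := hφ.comp (by fun_prop)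
  have hdiff : Differentiable ℝ φ := hφ.differentiable (by simp)
  refine ⟨fun t => if t ≤ r then 1 else H (φ (x₀ + t • θ)), contDiff_ite_le (hH.comp hray)
    (hray.continuous.continuousAt.eventually (hH1 _ hone)), fun t ht => if_pos ht, ?_,
    fun t ht => ?_⟩
  · obtain ⟨R, hRρ, hR⟩ := exists_lt_subset_ball (isClosed_tsupport φ) hsupp
    have hvanish {t : ℝ} (ht0 : 0 ≤ t) (ht : R ≤ t) : φ (x₀ + t • θ) = 0 :=
      image_eq_zero_of_notMem_tsupport fun hmem =>
        ht.not_gt ((add_smul_mem_ball_iff hθ ht0).1 (hR hmem))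
    have hrR : r < R := by
      by_contra! hRr
      linarith [hvanish hr hRr]
    refine ⟨R, hRρ, fun t ht => ?_⟩
    have hrt : r < t := hrR.trans_le ht
    simp only [if_neg hrt.not_ge, hvanish (hr.trans hrt.le) ht, hH0]
  · have hloc : (fun s => if s ≤ r then 1 else H (φ (x₀ + s • θ))) =ᶠ[𝓝 t]
        H ∘ fun s => φ (x₀ + s • θ) := by
      filter_upwards [lt_mem_nhds ht] with s hs
      exact if_neg hs.not_ge
    rw [hloc.deriv_eq, deriv_comp t (hH.differentiable (by simp) _)
      (hray.differentiable (by simp) t), enorm_mul]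
    gcongr
    · rw [← ofReal_norm]
      exact ENNReal.ofReal_le_ofReal (hHL _)
    · exact enorm_deriv_comp_ray_le hdiff x₀ hθ t

end Truncation

section RadialFunctions

variable {E : Type*} [NormedAddCommGroup E] [InnerProductSpace ℝ E]

theorem contDiff_comp_norm_sub {n : WithTop ℕ∞} {f : ℝ → ℝ} (hf : ContDiff ℝ n f) {c : ℝ}
    (hc : f =ᶠ[𝓝 0] fun _ => c) (x₀ : E) : ContDiff ℝ n fun y => f ‖y - x₀‖ := by
  refine contDiff_iff_contDiffAt.2 fun y => ?_
  rcases eq_or_ne y x₀ with rfl | hy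
  · have hnorm : Tendsto (fun z => ‖z - y‖) (𝓝 y) (𝓝 0) := by
      simpa using (continuous_id.sub (continuous_const (y := y))).norm.tendsto y
    exact contDiffAt_const.congr_of_eventuallyEq (hnorm.eventually hc)
  · exact hf.contDiffAt.comp y ((contDiffAt_id.sub contDiffAt_const).norm ℝ (sub_ne_zero.2 hy))

theorem enorm_fderiv_comp_norm_sub_le {f : ℝ → ℝ} (hf : Differentiable ℝ f) {x₀ y : E}
    (hy : y ≠ x₀) :
    ‖fderiv ℝ (fun z => f ‖z - x₀‖) y‖ₑ ≤ ‖deriv f ‖y - x₀‖‖ₑ := by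
  have hnorm : DifferentiableAt ℝ (fun z => ‖z - x₀‖) y :=
    (differentiableAt_id.sub_const x₀).norm ℝ (sub_ne_zero.2 hy)
  have hlip : LipschitzWith 1 fun z => ‖z - x₀‖ :=
    LipschitzWith.of_dist_le_mul fun u v => by
      simpa [dist_eq_norm] using abs_norm_sub_norm_le (u - x₀) (v - x₀)
  have hchain := (hf ‖y - x₀‖).hasDerivAt.comp_hasFDerivAt y hnorm.hasFDerivAt
  rw [show fderiv ℝ (fun z => f ‖z - x₀‖) y = _ from hchain.fderiv, enorm_le_iff_norm_le,
    norm_smul]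
  exact mul_le_of_le_one_right (norm_nonneg _) (norm_fderiv_le_of_lipschitz ℝ hlip)

variable [FiniteDimensional ℝ E]

theorem isCapacityTestFunction_radial {f : ℝ → ℝ} (hf : ContDiff ℝ ∞ f) {r R ρ : ℝ} (hr : 0 < r)
    (hone : ∀ t ≤ r, f t = 1) (hRρ : R < ρ) (hzero : ∀ t ≥ R, f t = 0) (x₀ : E) :
    IsCapacityTestFunction (closedBall x₀ r) (ball x₀ ρ) fun y => f ‖y - x₀‖ := by
  have hsupp : tsupport (fun y => f ‖y - x₀‖) ⊆ closedBall x₀ R := by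
    refine closure_minimal (fun y hy => ?_) isClosed_closedBall
    by_contra! hnot
    rw [mem_closedBall_iff_norm, not_le] at hnot
    exact hy (hzero _ hnot.le)
  exact {
    contDiff := contDiff_comp_norm_sub hf ((gt_mem_nhds hr).mono fun t ht => hone t ht.le) x₀
    hasCompactSupport :=
      (isCompact_closedBall x₀ R).of_isClosed_subset (isClosed_tsupport _) hsupp
    tsupport_subset := hsupp.trans (closedBall_subset_ball hRρ)
    one_le := fun y hy => (hone _ (mem_closedBall_iff_norm.1 hy)).ge }

variable [MeasurableSpace E] [BorelSpace E] [Nontrivial E] (μ : Measure E) [μ.IsAddHaarMeasure]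

theorem dirichletEnergy_radial_le {p : ℝ} (hp : 0 < p) {f : ℝ → ℝ} (hf : Differentiable ℝ f)
    {r : ℝ} (hone : ∀ t ≤ r, f t = 1) (x₀ : E) :
    dirichletEnergy μ p (fun y => f ‖y - x₀‖) ≤ μ.toSphere univ *
      ∫⁻ t in Ioi r, ENNReal.ofReal (t ^ (finrank ℝ E - 1)) * ‖deriv f t‖ₑ ^ p := by
  have hderiv : ∀ t < r, deriv f t = 0 := fun t ht => by
    have hloc : f =ᶠ[𝓝 t] fun _ => 1 := (gt_mem_nhds ht).mono fun s hs => hone s hs.le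
    rw [hloc.deriv_eq, deriv_const]
  have hray (θ : sphere (0 : E) 1) : rayEnergy p (fun y => f ‖y - x₀‖) x₀ 0 θ ≤
      ∫⁻ t in Ioi r, ENNReal.ofReal (t ^ (finrank ℝ E - 1)) * ‖deriv f t‖ₑ ^ p := by
    rw [setLIntegral_congr Ioi_ae_eq_Ici]
    calc
      rayEnergy p (fun y => f ‖y - x₀‖) x₀ 0 θ
        ≤ ∫⁻ t in Ioi 0, ENNReal.ofReal (t ^ (finrank ℝ E - 1)) * ‖deriv f t‖ₑ ^ p := by
          refine setLIntegral_mono' measurableSet_Ioi fun t (ht : 0 < t) => ?_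
          have hnorm : ‖x₀ + t • (θ : E) - x₀‖ = t := by
            simp [norm_smul, abs_of_pos ht]
          gcongr
          refine (enorm_fderiv_comp_norm_sub_le hf fun h => ?_).trans_eq (by rw [hnorm])
          exact ht.ne' (by rw [← hnorm, h, sub_self, norm_zero])
      _ ≤ ∫⁻ t in Ici r, ENNReal.ofReal (t ^ (finrank ℝ E - 1)) * ‖deriv f t‖ₑ ^ p := by
          rw [setLIntegral_eq_of_support_subset (s := Ici r)]
          · exact setLIntegral_le_lintegral _ _
          · intro t ht
            by_contra hrt
            exact ht (by simp [hderiv t (not_le.1 hrt), hp])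
  calc
    dirichletEnergy μ p (fun y => f ‖y - x₀‖)
      = ∫⁻ θ : sphere (0 : E) 1, rayEnergy p (fun y => f ‖y - x₀‖) x₀ 0 θ ∂μ.toSphere :=
        dirichletEnergy_eq_lintegral_rayEnergy μ p _ x₀
    _ ≤ _ := (lintegral_mono hray).trans_eq (by rw [lintegral_const, mul_comm])

theorem exists_isCapacityTestFunction_dirichletEnergy_le {p : ℝ} (hp : 0 < p) {φ : E → ℝ}
    (hφ : ContDiff ℝ ∞ φ) {x₀ : E} {ρ : ℝ} (hsupp : tsupport φ ⊆ ball x₀ ρ) {θ : E}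
    (hθ : ‖θ‖ = 1) {r : ℝ} (hr : 0 < r) (hone : 1 ≤ φ (x₀ + r • θ)) {L : ℝ} (hL : 1 < L) :
    ∃ g, IsCapacityTestFunction (closedBall x₀ r) (ball x₀ ρ) g ∧
      dirichletEnergy μ p g ≤ ENNReal.ofReal L ^ p * (μ.toSphere univ * rayEnergy p φ x₀ r θ) := by
  obtain ⟨f, hf, hf1, ⟨R, hRρ, hf0⟩, hfderiv⟩ :=
    exists_truncated_profile hφ hsupp hθ hr.le hone hL
  refine ⟨_, isCapacityTestFunction_radial hf hr hf1 hRρ hf0 x₀,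
    (dirichletEnergy_radial_le μ hp (hf.differentiable (by simp)) hf1 x₀).trans ?_⟩
  rw [mul_left_comm]
  gcongr μ.toSphere univ * ?_
  rw [rayEnergy, ← lintegral_const_mul' _ _ (by finiteness)]
  refine setLIntegral_mono' measurableSet_Ioi fun t ht => ?_
  rw [mul_left_comm, ← ENNReal.mul_rpow_of_nonneg _ _ hp.le]
  gcongr
  exact hfderiv t ht

end RadialFunctions

section Capacity

theorem IsCapacityTestFunction.mono {E : Type*} [NormedAddCommGroup E] [NormedSpace ℝ E]
    {K K' U : Set E} {φ : E → ℝ} (hφ : IsCapacityTestFunction K' U φ) (hK : K ⊆ K') :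
    IsCapacityTestFunction K U φ :=
  { hφ with one_le := fun x hx => hφ.one_le x (hK hx) }

theorem exists_isCapacityTestFunction {E : Type*} [NormedAddCommGroup E] [NormedSpace ℝ E]
    [FiniteDimensional ℝ E] (x₀ : E) {r ρ : ℝ} (hr : 0 < r) (hrρ : r < ρ) :
    ∃ φ, IsCapacityTestFunction (closedBall x₀ r) (ball x₀ ρ) φ := by
  obtain ⟨R, hrR, hRρ⟩ := exists_between hrρ
  let χ : ContDiffBump x₀ := ⟨r, R, hr, hrR⟩
  exact ⟨χ, {
    contDiff := χ.contDiff
    hasCompactSupport := χ.hasCompactSupport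
    tsupport_subset := χ.tsupport_eq.trans_subset (closedBall_subset_ball hRρ)
    one_le := fun x hx => (χ.one_of_mem_closedBall hx).ge }⟩

variable {N : ℕ} {p : ℝ} {K U : Set (EuclideanSpace ℝ (Fin N))}

theorem ofReal_pCapacity_le (hp : 0 < p) {φ : EuclideanSpace ℝ (Fin N) → ℝ}
    (hφ : IsCapacityTestFunction K U φ) :
    ENNReal.ofReal (pCapacity p K U) ≤ dirichletEnergy volume p φ := by
  rw [← ofReal_integral_norm_fderiv_rpow hp (hφ.contDiff.of_le (by simp)) hφ.hasCompactSupport]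
  refine ENNReal.ofReal_le_ofReal <| csInf_le ⟨0, ?_⟩
    ⟨φ, hφ.contDiff, hφ.hasCompactSupport, hφ.tsupport_subset, hφ.one_le, rfl⟩
  rintro _ ⟨ψ, -, -, -, -, rfl⟩
  positivity

theorem le_ofReal_pCapacity (hp : 0 < p) (hne : ∃ φ, IsCapacityTestFunction K U φ) {c : ℝ≥0∞}
    (hc : ∀ φ, IsCapacityTestFunction K U φ → c ≤ dirichletEnergy volume p φ) :
    c ≤ ENNReal.ofReal (pCapacity p K U) := by
  have henergy {φ : EuclideanSpace ℝ (Fin N) → ℝ} (hφ : IsCapacityTestFunction K U φ) :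
      c ≤ ENNReal.ofReal (∫ x, ‖fderiv ℝ φ x‖ ^ p) := by
    rw [ofReal_integral_norm_fderiv_rpow hp (hφ.contDiff.of_le (by simp)) hφ.hasCompactSupport]
    exact hc φ hφ
  obtain ⟨φ, hφ⟩ := hne
  rw [← ENNReal.ofReal_toReal (ne_top_of_le_ne_top ENNReal.ofReal_ne_top (henergy hφ))]
  refine ENNReal.ofReal_le_ofReal <| le_csInf
    ⟨_, φ, hφ.contDiff, hφ.hasCompactSupport, hφ.tsupport_subset, hφ.one_le, rfl⟩ ?_
  rintro _ ⟨ψ, hψ, hcompact, hsupp, hone, rfl⟩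
  exact ENNReal.toReal_le_of_le_ofReal (by positivity) (henergy ⟨hψ, hcompact, hsupp, hone⟩)

variable [NeZero N] {x₀ : EuclideanSpace ℝ (Fin N)} {r ρ : ℝ}

theorem ofReal_pCapacity_closedBall_le_mul_rayEnergy (hp : 0 < p)
    {φ : EuclideanSpace ℝ (Fin N) → ℝ} (hφ : ContDiff ℝ ∞ φ) (hsupp : tsupport φ ⊆ ball x₀ ρ)
    (hr : 0 < r) {θ : EuclideanSpace ℝ (Fin N)} (hθ : ‖θ‖ = 1) (hone : 1 ≤ φ (x₀ + r • θ)) :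
    ENNReal.ofReal (pCapacity p (closedBall x₀ r) (ball x₀ ρ)) ≤
      (volume : Measure (EuclideanSpace ℝ (Fin N))).toSphere univ * rayEnergy p φ x₀ r θ := by
  set A := (volume : Measure (EuclideanSpace ℝ (Fin N))).toSphere univ * rayEnergy p φ x₀ r θ
  have hbound : ∀ L > 1, ENNReal.ofReal (pCapacity p (closedBall x₀ r) (ball x₀ ρ)) ≤
      ENNReal.ofReal L ^ p * A := fun L hL => by
    obtain ⟨g, hg, hgA⟩ :=
      exists_isCapacityTestFunction_dirichletEnergy_le volume hp hφ hsupp hθ hr hone hL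
    exact (ofReal_pCapacity_le hp hg).trans hgA
  have hlim : Tendsto (fun L => ENNReal.ofReal L ^ p * A) (𝓝[>] 1) (𝓝 A) := by
    have hcont : Continuous fun L => ENNReal.ofReal L ^ p :=
      (ENNReal.continuous_rpow_const).comp ENNReal.continuous_ofReal
    simpa using ENNReal.Tendsto.mul_const (b := A)
      ((hcont.tendsto 1).mono_left nhdsWithin_le_nhds) (by simp)
  exact ge_of_tendsto hlim (eventually_mem_nhdsWithin.mono hbound)

theorem pCapacity_closedBall_pos (hp : 1 ≤ p) (x₀ : EuclideanSpace ℝ (Fin N)) (hr : 0 < r)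
    (hrρ : r < ρ) : 0 < pCapacity p (closedBall x₀ r) (ball x₀ ρ) := by
  have hp0 : 0 < p := one_pos.trans_le hp
  set w := ENNReal.ofReal (r ^ (finrank ℝ (EuclideanSpace ℝ (Fin N)) - 1))
  set V := ENNReal.ofReal (ρ - r) ^ (p - 1)
  set σ := (volume : Measure (EuclideanSpace ℝ (Fin N))).toSphere
  have hbound : w / V * σ univ ≤ ENNReal.ofReal (pCapacity p (closedBall x₀ r) (ball x₀ ρ)) := by
    refine le_ofReal_pCapacity hp0 (exists_isCapacityTestFunction x₀ hr hrρ) fun φ hφ => ?_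
    refine mul_toSphere_le_dirichletEnergy volume x₀ hr.le .univ fun θ _ => ?_
    have hθ : ‖(θ : EuclideanSpace ℝ (Fin N))‖ = 1 := by simp
    have hone : 1 ≤ φ (x₀ + r • θ.1) := hφ.one_le _ (by simp [norm_smul, abs_of_pos hr])
    have hzero : φ (x₀ + ρ • θ.1) = 0 := image_eq_zero_of_notMem_tsupport fun hmem =>
      lt_irrefl ρ ((add_smul_mem_ball_iff hθ (hr.trans hrρ).le).1 (hφ.tsupport_subset hmem))
    exact ENNReal.div_le_of_le_mul' <|
      ofReal_pow_le_mul_rayEnergy hp (hφ.contDiff.of_le (by simp)) hθ hr.le hrρ.le hone hzero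
  have hw : w ≠ 0 := (ENNReal.ofReal_pos.2 (pow_pos hr _)).ne'
  have hV : V ≠ ⊤ := by finiteness
  have hσ : σ univ ≠ 0 := Measure.measure_univ_ne_zero.2 (Measure.toSphere_ne_zero volume)
  refine ENNReal.ofReal_pos.1 (lt_of_lt_of_le ?_ hbound)
  exact pos_iff_ne_zero.2 (mul_ne_zero (ENNReal.div_ne_zero.2 ⟨hw, hV⟩) hσ)

theorem ofReal_pCapacity_closedBall_mul_toSphere_le (hp : 0 < p) (hr : 0 < r) (hrρ : r < ρ)
    (hK : MeasurableSet K) (hKr : K ⊆ closedBall x₀ r) :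
    ENNReal.ofReal (pCapacity p (closedBall x₀ r) (ball x₀ ρ)) *
        (volume : Measure (EuclideanSpace ℝ (Fin N))).toSphere {θ | x₀ + r • θ.1 ∈ K} ≤
      (volume : Measure (EuclideanSpace ℝ (Fin N))).toSphere univ *
        ENNReal.ofReal (pCapacity p K (ball x₀ ρ)) := by
  set σ := (volume : Measure (EuclideanSpace ℝ (Fin N))).toSphere
  set C := ENNReal.ofReal (pCapacity p (closedBall x₀ r) (ball x₀ ρ))
  have hσ : σ univ ≠ 0 := Measure.measure_univ_ne_zero.2 (Measure.toSphere_ne_zero volume)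
  have hmeas : MeasurableSet {θ : sphere (0 : EuclideanSpace ℝ (Fin N)) 1 | x₀ + r • θ.1 ∈ K} :=
    hK.preimage (by fun_prop)
  suffices h : C / σ univ * σ {θ | x₀ + r • θ.1 ∈ K} ≤
      ENNReal.ofReal (pCapacity p K (ball x₀ ρ)) by
    rw [← ENNReal.mul_div_cancel hσ (measure_ne_top σ univ) (b := C), mul_assoc]
    gcongr
  refine le_ofReal_pCapacity hp ?_ fun φ hφ => ?_
  · obtain ⟨φ, hφ⟩ := exists_isCapacityTestFunction x₀ hr hrρ
    exact ⟨φ, hφ.mono hKr⟩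
  · refine mul_toSphere_le_dirichletEnergy volume x₀ hr.le hmeas fun θ hθ => ?_
    exact ENNReal.div_le_of_le_mul' <| ofReal_pCapacity_closedBall_le_mul_rayEnergy hp
      hφ.contDiff hφ.tsupport_subset hr (by simp) (hφ.one_le _ hθ)

theorem IsNegligible.toSphere_le {γ : ℝ} {Ω : Set (EuclideanSpace ℝ (Fin N))} (hp : 1 ≤ p)
    (hr : 0 < r) (hΩ : MeasurableSet Ω) (h : IsNegligible p γ Ω x₀ r) :
    (volume : Measure (EuclideanSpace ℝ (Fin N))).toSphere {θ | x₀ + r • θ.1 ∉ Ω} ≤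
      ENNReal.ofReal γ * (volume : Measure (EuclideanSpace ℝ (Fin N))).toSphere univ := by
  set σ := (volume : Measure (EuclideanSpace ℝ (Fin N))).toSphere
  have hr2 : r < 2 * r := by linarith
  have hcap := pCapacity_closedBall_pos hp x₀ hr hr2
  set C := pCapacity p (closedBall x₀ r) (ball x₀ (2 * r))
  have hdir : {θ : sphere (0 : EuclideanSpace ℝ (Fin N)) 1 | x₀ + r • θ.1 ∉ Ω} =
      {θ | x₀ + r • θ.1 ∈ closedBall x₀ r \ Ω} := by
    ext θ
    simp [norm_smul, abs_of_pos hr]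
  rw [hdir, ← ENNReal.mul_le_mul_iff_right (a := ENNReal.ofReal C) (ENNReal.ofReal_pos.2 hcap).ne'
    ENNReal.ofReal_ne_top]
  calc
    ENNReal.ofReal C * σ {θ | x₀ + r • θ.1 ∈ closedBall x₀ r \ Ω}
      ≤ σ univ * ENNReal.ofReal (pCapacity p (closedBall x₀ r \ Ω) (ball x₀ (2 * r))) :=
        ofReal_pCapacity_closedBall_mul_toSphere_le (one_pos.trans_le hp) hr hr2
          (measurableSet_closedBall.diff hΩ) sdiff_subset
    _ ≤ σ univ * ENNReal.ofReal (γ * C) := by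
        gcongr
        exact h
    _ = ENNReal.ofReal C * (ENNReal.ofReal γ * σ univ) := by
        rw [ENNReal.ofReal_mul' hcap.le]
        ring

theorem capInradius_ne_top_of_eventually_lt_toSphere {γ : ℝ}
    {Ω : Set (EuclideanSpace ℝ (Fin N))} (hp : 1 ≤ p) (hΩ : MeasurableSet Ω)
    (h : ∀ᶠ r : ℝ in atTop, ∀ x₀,
      ENNReal.ofReal γ * (volume : Measure (EuclideanSpace ℝ (Fin N))).toSphere univ <
        (volume : Measure (EuclideanSpace ℝ (Fin N))).toSphere {θ | x₀ + r • θ.1 ∉ Ω}) :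
    capInradius p γ Ω ≠ ⊤ := by
  obtain ⟨R, hR⟩ := eventually_atTop.1 h
  refine ne_top_of_le_ne_top (ENNReal.ofReal_ne_top (r := R)) (sSup_le ?_)
  rintro _ ⟨r, hr, rfl, x₀, hneg⟩
  refine ENNReal.ofReal_le_ofReal (le_of_not_gt fun hRr => ?_)
  exact (hneg.toSphere_le hp hr hΩ).not_gt (hR r hRr.le x₀)

end Capacity

section Slab

theorem eventually_forall_toSphere_abs_inner_lt {E : Type*} [NormedAddCommGroup E]
    [InnerProductSpace ℝ E] [FiniteDimensional ℝ E] [MeasurableSpace E] [BorelSpace E]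
    (μ : Measure E) [μ.IsAddHaarMeasure] (hE : 1 < finrank ℝ E) {v : E} (hv : v ≠ 0) (h : ℝ)
    {ε : ℝ≥0∞} (hε : 0 < ε) :
    ∀ᶠ r : ℝ in atTop, ∀ x₀ : E, μ.toSphere {θ | |⟪v, x₀ + r • θ.1⟫| < h} < ε := by
  obtain ⟨δ, hδ, hstrip⟩ := exists_pos_forall_toSphere_abs_inner_sub_lt μ hE hv hε
  filter_upwards [eventually_gt_atTop 0, eventually_ge_atTop (h / δ)] with r hr hrδ x₀
  refine (measure_mono fun θ hθ => ?_).trans_lt (hstrip (-(⟪v, x₀⟫ / r)))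
  have hscale : ⟪v, x₀ + r • θ.1⟫ = r * (⟪v, θ.1⟫ - -(⟪v, x₀⟫ / r)) := by
    rw [inner_add_right, inner_smul_right]
    field_simp
    ring
  rw [mem_ofPred_eq, hscale, abs_mul, abs_of_pos hr] at hθ
  exact (mul_lt_mul_iff_right₀ hr).1 (hθ.trans_le ((div_le_iff₀ hδ).1 hrδ))

theorem slab_capInradius_finite_general {N : ℕ} (hN : 2 ≤ N) {p γ : ℝ} (hp : 1 ≤ p) (hγ : γ < 1)
    {v : EuclideanSpace ℝ (Fin N)} (hv : v ≠ 0) (h : ℝ) :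
    capInradius p γ {x | |⟪v, x⟫| < h} ≠ ⊤ := by
  have : NeZero N := ⟨by omega⟩
  set σ := (volume : Measure (EuclideanSpace ℝ (Fin N))).toSphere
  have hσ : σ univ ≠ 0 := Measure.measure_univ_ne_zero.2 (Measure.toSphere_ne_zero volume)
  have hγσ : ENNReal.ofReal γ * σ univ < σ univ :=
    (ENNReal.mul_lt_mul_left hσ (measure_ne_top σ univ) (ENNReal.ofReal_lt_one.2 hγ)).trans_eq
      (one_mul _)
  have hmeas : MeasurableSet {x : EuclideanSpace ℝ (Fin N) | |⟪v, x⟫| < h} :=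
    (isOpen_lt (by fun_prop) continuous_const).measurableSet
  refine capInradius_ne_top_of_eventually_lt_toSphere hp hmeas ?_
  filter_upwards [eventually_forall_toSphere_abs_inner_lt volume
    (by rwa [finrank_euclideanSpace_fin]) hv h (tsub_pos_of_lt hγσ)] with r hr x₀
  have hinside : MeasurableSet {θ : sphere (0 : EuclideanSpace ℝ (Fin N)) 1 |
      |⟪v, x₀ + r • θ.1⟫| < h} := (isOpen_lt (by fun_prop) continuous_const).measurableSet
  calc
    ENNReal.ofReal γ * σ univ
      < σ univ - σ {θ | |⟪v, x₀ + r • θ.1⟫| < h} := lt_tsub_comm.1 (hr x₀)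
    _ = σ {θ | |⟪v, x₀ + r • θ.1⟫| < h}ᶜ := (measure_compl hinside (measure_ne_top σ _)).symm

end Slab

/-- The open slab `ℝ^{N-1} × (-1,1)` has finite `(p,γ)`-capacitary inradius for every
`1 < p < N` and every `0 < γ < 1`. -/
theorem slab_capInradius_finite (N : ℕ) (p γ : ℝ)
    (hN : 2 ≤ N) (hp1 : 1 < p) (hpN : p < (N:ℝ)) (hγ0 : 0 < γ) (hγ1 : γ < 1) :
    capInradius p γ {x : EuclideanSpace ℝ (Fin N) | |x ⟨N - 1, by omega⟩| < 1} ≠ ⊤ := by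
  simpa only [EuclideanSpace.inner_single_left, map_one, one_mul] using
    slab_capInradius_finite_general hN hp1.le hγ1
      (v := EuclideanSpace.single ⟨N - 1, by omega⟩ 1) (by simp) 1
end
end
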